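/- arXiv:2305.01495 — 5 statements merged into one kernel-verified Lean document; each statement's English description precedes it below -/
import Mathlib

section
/- Let n ≥ 3, let f : ℝ → ℝ be continuous with f(0) = 0, and set F(s) = ∫₀ˢ f(σ) dσ. If φ : ℝⁿ → ℝ is a smooth compactly supported solution of −Δφ + f(φ) = 0, then the Pohozaev identity ((n−2)/2) ∫_{ℝⁿ} |∇φ|² dx + n ∫_{ℝⁿ} F(φ) dx = 0 holds. In particular, if F(s) ≥ 0 for all s ∈ ℝ, then φ ≡ 0; that is, no nontrivial stationary solution exists when the potential is nonnegative. -/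
open MeasureTheory Filter

noncomputable section

/-- The Laplacian of a function on `ℝⁿ`, as the sum of second partial derivatives. -/
def lapn (n : ℕ) (u : EuclideanSpace ℝ (Fin n) → ℝ) (x : EuclideanSpace ℝ (Fin n)) : ℝ :=
  ∑ i : Fin n,
    fderiv ℝ (fun y => fderiv ℝ u y (EuclideanSpace.single i 1)) x (EuclideanSpace.single i 1)

/-- The potential `F(s) = ∫₀ˢ f(σ) dσ`. -/
def pot (f : ℝ → ℝ) (s : ℝ) : ℝ := ∫ σ in (0:ℝ)..s, f σ

lemma aux_two : (2 : WithTop ℕ∞) ≤ ((⊤ : ℕ∞) : WithTop ℕ∞) :=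
  WithTop.coe_le_coe.2 (le_top : (2 : ℕ∞) ≤ ⊤)

lemma aux_div (n : ℕ) (g : EuclideanSpace ℝ (Fin n) → ℝ) (hg : ContDiff ℝ 1 g)
    (hs : HasCompactSupport g) (v : EuclideanSpace ℝ (Fin n)) :
    Integrable (fun x => fderiv ℝ g x v) ∧ ∫ x, fderiv ℝ g x v = 0 := by
  have hc : Continuous (fun x => fderiv ℝ g x v) :=
    (hg.continuous_fderiv (by norm_num)).clm_apply continuous_const
  have hi : Integrable (fun x => fderiv ℝ g x v) :=
    hc.integrable_of_hasCompactSupport (hs.fderiv_apply (𝕜 := ℝ) v)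
  have hi2 : Integrable g := hg.continuous.integrable_of_hasCompactSupport hs
  refine ⟨hi, ?_⟩
  have := integral_mul_fderiv_eq_neg_fderiv_mul_of_integrable (𝕜 := ℝ) (μ := volume)
    (f := fun _ : EuclideanSpace ℝ (Fin n) => (1:ℝ)) (g := g) (v := v)
    (by simp) (by simpa using hi) (by simpa using hi2)
    (fun x _ => differentiableAt_const _) (fun x _ => hg.differentiable (by norm_num) x)
  simpa using this

lemma aux_pot (f : ℝ → ℝ) (hf : Continuous f) (s : ℝ) : HasDerivAt (pot f) (f s) s :=
  intervalIntegral.integral_hasDerivAt_right (hf.intervalIntegrable _ _)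
    (hf.stronglyMeasurableAtFilter _ _) hf.continuousAt

lemma aux_pot_contDiff (f : ℝ → ℝ) (hf : Continuous f) : ContDiff ℝ 1 (pot f) := by
  rw [contDiff_one_iff_deriv]
  refine ⟨fun s => (aux_pot f hf s).differentiableAt, ?_⟩
  have : deriv (pot f) = f := funext fun s => (aux_pot f hf s).deriv
  rwa [this]

lemma aux_norm (n : ℕ) (φ : EuclideanSpace ℝ (Fin n) → ℝ) (x : EuclideanSpace ℝ (Fin n)) :
    ‖gradient φ x‖ ^ 2 = ∑ j, (fderiv ℝ φ x (EuclideanSpace.single j 1)) ^ 2 := by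
  rw [EuclideanSpace.norm_sq_eq]
  refine Finset.sum_congr rfl fun j _ => ?_
  have : fderiv ℝ φ x (EuclideanSpace.single j 1) = gradient φ x j := by
    have h := InnerProductSpace.toDual_symm_apply (𝕜 := ℝ) (x := EuclideanSpace.single j (1:ℝ))
      (y := fderiv ℝ φ x)
    rw [← h, EuclideanSpace.inner_single_right]
    simp [gradient]
  rw [this]; simp

lemma aux_symm (n : ℕ) (φ : EuclideanSpace ℝ (Fin n) → ℝ) (hφ : ContDiff ℝ (⊤ : ℕ∞) φ)
    (x v w : EuclideanSpace ℝ (Fin n)) :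
    fderiv ℝ (fun y => fderiv ℝ φ y v) x w = fderiv ℝ (fun y => fderiv ℝ φ y w) x v := by
  have hd : DifferentiableAt ℝ (fderiv ℝ φ) x :=
    (hφ.fderiv_right (m := 1) (by rw [one_add_one_eq_two]; exact aux_two)).differentiable (by norm_num) x
  have h := (hφ.contDiffAt (x := x)).isSymmSndFDerivAt (by
    rw [minSmoothness_of_isRCLikeNormedField]; exact aux_two)
  have key : ∀ a b, fderiv ℝ (fun y => fderiv ℝ φ y a) x b = fderiv ℝ (fderiv ℝ φ) x b a := by
    intro a b
    rw [fderiv_clm_apply hd (differentiableAt_const a)]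
    simp
  rw [key, key]
  exact h _ _

/-- Pohozaev identity: a smooth compactly supported solution of
`-Δφ + f(φ) = 0` on `ℝⁿ`, `n ≥ 3`, satisfies
`((n-2)/2) ∫ |∇φ|² + n ∫ F(φ) = 0`; in particular if `F ≥ 0` then `φ ≡ 0`. -/
theorem pohozaev_no_stationary_solutions
    (n : ℕ) (hn : 3 ≤ n)
    (f : ℝ → ℝ) (hf : Continuous f) (hf0 : f 0 = 0)
    (φ : EuclideanSpace ℝ (Fin n) → ℝ)
    (hφ : ContDiff ℝ (⊤ : ℕ∞) φ) (hsupp : HasCompactSupport φ)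
    (heq : ∀ x : EuclideanSpace ℝ (Fin n), -lapn n φ x + f (φ x) = 0) :
    ((n : ℝ) - 2) / 2 * (∫ x : EuclideanSpace ℝ (Fin n), ‖gradient φ x‖ ^ 2)
      + (n : ℝ) * (∫ x : EuclideanSpace ℝ (Fin n), pot f (φ x)) = 0
    ∧ ((∀ s : ℝ, 0 ≤ pot f s) → ∀ x : EuclideanSpace ℝ (Fin n), φ x = 0) := by
  let e : Fin n → EuclideanSpace ℝ (Fin n) := fun i => EuclideanSpace.single i 1
  let d : Fin n → EuclideanSpace ℝ (Fin n) → ℝ := fun i x => fderiv ℝ φ x (e i)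
  let D : Fin n → Fin n → EuclideanSpace ℝ (Fin n) → ℝ := fun i j x => fderiv ℝ (d i) x (e j)
  have hDs : ∀ i j x, D i j x = D j i x := fun i j x => aux_symm n φ hφ x (e i) (e j)
  have hd : ∀ i, ContDiff ℝ 1 (d i) := fun i =>
    (hφ.fderiv_right (m := 1) (by rw [one_add_one_eq_two]; exact aux_two)).clm_apply contDiff_const
  have hds : ∀ i, HasCompactSupport (d i) := fun i => hsupp.fderiv_apply (𝕜 := ℝ) (e i)
  have hφ1 : ContDiff ℝ 1 φ := hφ.of_le (by exact_mod_cast le_top)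
  have hX : ∀ i : Fin n, ContDiff ℝ 1 (fun x : EuclideanSpace ℝ (Fin n) => x i) := fun i =>
    (EuclideanSpace.proj i : EuclideanSpace ℝ (Fin n) →L[ℝ] ℝ).contDiff
  have hlap : ∀ x, ∑ i, D i i x = f (φ x) := by
    intro x
    have := heq x
    have h2 : lapn n φ x = ∑ i, D i i x := rfl
    linarith
  have hP : ContDiff ℝ 1 (fun x => pot f (φ x)) := (aux_pot_contDiff f hf).comp hφ1
  have hPs : HasCompactSupport (fun x => pot f (φ x)) :=
    hsupp.comp_left (g := pot f) (by simp [pot])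
  let S : EuclideanSpace ℝ (Fin n) → ℝ := fun x => ∑ j, x j * d j x
  let Q : EuclideanSpace ℝ (Fin n) → ℝ := fun x => ∑ j, d j x ^ 2
  have hQ : ContDiff ℝ 1 Q := ContDiff.sum fun j _ => (hd j).pow 2
  have hS : ContDiff ℝ 1 S := ContDiff.sum fun j _ => (hX j).mul (hd j)
  have hQs : HasCompactSupport Q := by
    refine (hsupp.fderiv (𝕜 := ℝ)).mono ?_
    intro x hx h0
    apply hx
    have h0' : fderiv ℝ φ x = 0 := h0
    simp [Q, d, h0']
  let V : Fin n → EuclideanSpace ℝ (Fin n) → ℝ := fun i x =>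
    S x * d i x - x i * (Q x / 2 + pot f (φ x))
  have hV : ∀ i, ContDiff ℝ 1 (V i) := fun i =>
    (hS.mul (hd i)).sub ((hX i).mul ((hQ.div_const 2).add hP))
  have hVs : ∀ i, HasCompactSupport (V i) := by
    intro i
    have h1 : HasCompactSupport (fun x => S x * d i x) := (hds i).mul_left (f := S)
    have h2 : HasCompactSupport (fun x => Q x / 2 + pot f (φ x)) :=
      (hQs.comp_left (g := fun t => t / 2) (by simp)).add hPs
    exact h1.sub (h2.mul_left (f := fun x : EuclideanSpace ℝ (Fin n) => x i))
  have hdF : ∀ i x, HasFDerivAt (d i) (fderiv ℝ (d i) x) x := fun i x =>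
    ((hd i).differentiable (by norm_num) x).hasFDerivAt
  have hXF : ∀ (i : Fin n) (x : EuclideanSpace ℝ (Fin n)),
      HasFDerivAt (fun x : EuclideanSpace ℝ (Fin n) => x i)
      (EuclideanSpace.proj i : EuclideanSpace ℝ (Fin n) →L[ℝ] ℝ) x := fun i x =>
    (EuclideanSpace.proj i : EuclideanSpace ℝ (Fin n) →L[ℝ] ℝ).hasFDerivAt
  have hVd : ∀ i x, fderiv ℝ (V i) x (e i) =
      (d i x + ∑ j, x j * D j i x) * d i x + S x * D i i x
      - (Q x / 2 + pot f (φ x)) - x i * (∑ j, d j x * D j i x + f (φ x) * d i x) := by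
    intro i x
    have hφF : HasFDerivAt φ (fderiv ℝ φ x) x :=
      (hφ1.differentiable (by norm_num) x).hasFDerivAt
    have hPF := (aux_pot f hf (φ x)).comp_hasFDerivAt x hφF
    have hSF : HasFDerivAt S _ x := HasFDerivAt.fun_sum fun j (_ : j ∈ Finset.univ) => (hXF j x).mul (hdF j x)
    have hQF : HasFDerivAt Q _ x := HasFDerivAt.fun_sum fun j (_ : j ∈ Finset.univ) => (hdF j x).pow 2
    have hVF : HasFDerivAt (V i) _ x :=
      (hSF.mul (hdF i x)).sub ((hXF i x).mul ((hQF.mul_const (1/2)).add hPF) |>.congr_of_eventuallyEq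
        (Filter.Eventually.of_forall fun y => by simp [div_eq_mul_inv]))
    rw [hVF.fderiv]
    have e1 : ∀ j : Fin n, (e i) j = if j = i then 1 else 0 := by
      intro j; simp [e, Pi.single_apply]
    have e2 : ∑ j, x j * D j i x + d i x = ∑ j, (x j * D j i x + d j x * (e i) j) := by
      rw [Finset.sum_add_distrib]; simp [e1]
    have e3 : ∑ j, d j x * D j i x = (∑ j, 2 * (d j x * D j i x)) * (1/2) := by
      rw [← Finset.mul_sum]; ring
    rw [add_comm (d i x), e2, e3]
    have e4 : (e i) i = 1 := by simp [e1]
    have e5 : fderiv ℝ φ x (e i) = d i x := rfl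
    have e6 : ∀ j, fderiv ℝ (d j) x (e i) = D j i x := fun _ => rfl
    simp [ContinuousLinearMap.sum_apply, e4, e5, e6, mul_assoc]
    ring
  have hdiv : ∀ x, ∑ i, fderiv ℝ (V i) x (e i) = (1 - n / 2 : ℝ) * Q x - n * pot f (φ x) := by
    intro x
    simp only [hVd]
    have a1 : ∑ i, (∑ j, x j * D j i x) * d i x = ∑ i, x i * ∑ j, d j x * D j i x := by
      simp only [Finset.sum_mul, Finset.mul_sum]
      rw [Finset.sum_comm]
      refine Finset.sum_congr rfl fun i _ => Finset.sum_congr rfl fun j _ => ?_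
      rw [hDs i j]; ring
    have a2 : ∑ i, S x * D i i x = S x * f (φ x) := by rw [← Finset.mul_sum, hlap]
    have a3 : ∑ i, x i * (f (φ x) * d i x) = S x * f (φ x) := by
      simp only [S, Finset.sum_mul]
      exact Finset.sum_congr rfl fun i _ => by ring
    have a4 : ∑ i, d i x * d i x = Q x := Finset.sum_congr rfl fun i _ => by ring
    simp only [Finset.sum_sub_distrib, Finset.sum_add_distrib, add_mul, mul_add, a1, a2, a3, a4,
      Finset.sum_const, Finset.card_univ, Fintype.card_fin, nsmul_eq_mul]
    ring
  have hQi : Integrable Q := hQ.continuous.integrable_of_hasCompactSupport hQs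
  have hPi : Integrable (fun x => pot f (φ x)) :=
    hP.continuous.integrable_of_hasCompactSupport hPs
  have hgQ : (fun x => ‖gradient φ x‖ ^ 2) = Q := funext fun x => aux_norm n φ x
  have hmain : ((n : ℝ) - 2) / 2 * (∫ x, Q x) + n * ∫ x, pot f (φ x) = 0 := by
    have h0 : ∫ x, ∑ i, fderiv ℝ (V i) x (e i) = 0 := by
      rw [integral_finsetSum _ fun i _ => (aux_div n (V i) (hV i) (hVs i) (e i)).1]
      exact Finset.sum_eq_zero fun i _ => (aux_div n (V i) (hV i) (hVs i) (e i)).2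
    simp only [hdiv] at h0
    rw [integral_sub (hQi.const_mul _) (hPi.const_mul _), integral_const_mul,
      integral_const_mul] at h0
    linarith
  rw [hgQ]
  refine ⟨hmain, fun hF => ?_⟩
  have hn' : (3:ℝ) ≤ n := by exact_mod_cast hn
  have hQ0 : ∀ x, 0 ≤ Q x := fun x => Finset.sum_nonneg fun j _ => sq_nonneg _
  have hI1 : 0 ≤ ∫ x, Q x := integral_nonneg hQ0
  have hI2 : 0 ≤ ∫ x, pot f (φ x) := integral_nonneg fun x => hF _
  have hI : ∫ x, Q x = 0 := by nlinarith
  have hQz : Q = 0 := by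
    have := (integral_eq_zero_iff_of_nonneg hQ0 hQi).1 hI
    exact (hQ.continuous.ae_eq_iff_eq volume continuous_zero).1 this
  have hfd : ∀ x, fderiv ℝ φ x = 0 := by
    intro x
    have h1 : ‖gradient φ x‖ ^ 2 = 0 := by
      have := congrFun hgQ x
      simp only [hQz] at this
      exact this
    have h2 : gradient φ x = 0 := by simpa using h1
    simpa [gradient] using h2
  intro x
  have hconst := is_const_of_fderiv_eq_zero (hφ1.differentiable (by norm_num)) hfd
  haveI : Nonempty (Fin n) := ⟨⟨0, by omega⟩⟩
  haveI : NoncompactSpace (EuclideanSpace ℝ (Fin n)) := NormedSpace.noncompactSpace ℝ _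
  have hex : ∃ y, y ∉ tsupport φ := by
    by_contra! h
    exact hsupp.isCompact.ne_univ (Set.eq_univ_of_forall h)
  obtain ⟨y, hy⟩ := hex
  rw [hconst x y]
  exact image_eq_zero_of_notMem_tsupport hy

end
end

section
/- There exists a universal constant C > 0 such that for every smooth compactly supported radial function u : ℝ³ → ℝ with radial profile v (i.e. u(x) = v(|x|)), one has r·|v(r)| ≤ C · ( ∫_{ℝ³} (u(x)² + |∇u(x)|²) dx )^{1/2} for all r ≥ 0. -/
open MeasureTheory Filter

noncomputable section

/-- Euclidean space `ℝ³`. -/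
abbrev E3 : Type := EuclideanSpace ℝ (Fin 3)

lemma aux_one_dim (w : ℝ → ℝ) (hw : ContDiff ℝ 1 w) (hc : HasCompactSupport w) (r : ℝ)
    (hr : 0 ≤ r) :
    (r * |w r|) ^ 2 ≤ ∫ t in Set.Ioi (0:ℝ), t ^ 2 * (w t ^ 2 + deriv w t ^ 2) := by
  have hwc : Continuous w := hw.continuous
  have hdc : Continuous (deriv w) := hw.continuous_deriv le_rfl
  have hcd : HasCompactSupport (deriv w) := hc.deriv
  have hcF : HasCompactSupport (fun t => w t ^ 2 + deriv w t ^ 2) := by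
    apply HasCompactSupport.add
    · exact hc.comp_left (g := fun y : ℝ => y ^ 2) (by simp)
    · exact hcd.comp_left (g := fun y : ℝ => y ^ 2) (by simp)
  have hcG : HasCompactSupport (fun t => t ^ 2 * (w t ^ 2 + deriv w t ^ 2)) :=
    hcF.mul_left (f := fun t : ℝ => t ^ 2)
  have hG : Integrable (fun t => t ^ 2 * (w t ^ 2 + deriv w t ^ 2)) :=
    Continuous.integrable_of_hasCompactSupport (by fun_prop) hcG
  have hsq : HasCompactSupport (fun t => w t ^ 2) :=
    hc.comp_left (g := fun y : ℝ => y ^ 2) (by simp)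
  have h1 : ∫ t in Set.Ioi r, deriv (fun t => w t ^ 2) t = - (w r ^ 2) :=
    HasCompactSupport.integral_Ioi_deriv_eq (hw.pow 2) hsq r
  have hd : ∀ t, deriv (fun t => w t ^ 2) t = 2 * w t * deriv w t := by
    intro t
    have := ((hw.differentiable (by simp) t).hasDerivAt.pow 2).deriv
    simpa [Pi.pow_def] using this
  have hI : Integrable (fun t => - (r ^ 2 * (2 * w t * deriv w t))) := by
    apply Continuous.integrable_of_hasCompactSupport (by fun_prop)
    have : HasCompactSupport (fun t => (- r ^ 2 * 2 * w t) * deriv w t) :=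
      hcd.mul_left (f := fun t => - r ^ 2 * 2 * w t)
    have heq : (fun t => - (r ^ 2 * (2 * w t * deriv w t))) =
        fun t => (- r ^ 2 * 2 * w t) * deriv w t := by
      funext t
      ring
    rw [heq]
    exact this
  calc (r * |w r|) ^ 2 = ∫ t in Set.Ioi r, - (r ^ 2 * (2 * w t * deriv w t)) := by
        rw [integral_neg, integral_const_mul]
        simp_rw [← hd]
        rw [h1, mul_pow, sq_abs]; ring
    _ ≤ ∫ t in Set.Ioi r, t ^ 2 * (w t ^ 2 + deriv w t ^ 2) := by
        apply setIntegral_mono_on hI.integrableOn hG.integrableOn measurableSet_Ioi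
        intro t ht
        have ht' : r < t := ht
        have h2 : r ^ 2 ≤ t ^ 2 := by gcongr
        have h3 : r ^ 2 * (w t ^ 2 + deriv w t ^ 2) ≤ t ^ 2 * (w t ^ 2 + deriv w t ^ 2) := by
          gcongr
        nlinarith [mul_nonneg (sq_nonneg r) (sq_nonneg (w t + deriv w t))]
    _ ≤ _ := by
        apply setIntegral_mono_set hG.integrableOn
        · exact Eventually.of_forall fun t => by positivity
        · exact (Set.Ioi_subset_Ioi hr).eventuallyLE

/-- Radial Sobolev estimate: there is a universal constant `C > 0` such that
for every smooth compactly supported radial function `u` on `ℝ³` with radial profile `v`,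
`r |v(r)| ≤ C ‖u‖_{H¹(ℝ³)}` for all `r ≥ 0`. -/
theorem radial_sobolev_estimate :
    ∃ C : ℝ, 0 < C ∧
      ∀ (u : E3 → ℝ) (v : ℝ → ℝ),
        ContDiff ℝ (⊤ : ℕ∞) u → HasCompactSupport u → (∀ x : E3, u x = v ‖x‖) →
        ∀ r : ℝ, 0 ≤ r →
          r * |v r| ≤ C * Real.sqrt (∫ x : E3, ((u x) ^ 2 + ‖gradient u x‖ ^ 2)) := by
  set c : ℝ := 3 * (volume : Measure E3).real (Metric.ball 0 1) with hcdef
  have hc0 : 0 < c := by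
    have : 0 < (volume : Measure E3).real (Metric.ball 0 1) :=
      ENNReal.toReal_pos (Metric.measure_ball_pos _ _ one_pos).ne' measure_ball_lt_top.ne
    positivity
  refine ⟨Real.sqrt c⁻¹, by positivity, ?_⟩
  intro u v hu hcs huv r hr
  obtain ⟨e, he⟩ : ∃ e : E3, ‖e‖ = 1 := ⟨EuclideanSpace.single 0 1, by simp⟩
  set w : ℝ → ℝ := fun t => u (t • e) with hwdef
  have hwv : ∀ t, 0 ≤ t → w t = v t := by
    intro t ht
    simp [hwdef, huv, norm_smul, he, abs_of_nonneg ht]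
  have hu1 : ContDiff ℝ 1 u := hu.of_le (by exact_mod_cast le_top)
  have hw : ContDiff ℝ 1 w := hu1.comp (by fun_prop)
  have hemb : Topology.IsClosedEmbedding (fun t : ℝ => t • e) := by
    apply isClosedEmbedding_smul_left
    rintro rfl
    simp at he
  have hwc : HasCompactSupport w := hcs.comp_isClosedEmbedding hemb
  have hdw : Continuous (deriv w) := hw.continuous_deriv le_rfl
  have hgrad : ∀ x, ‖gradient u x‖ = ‖fderiv ℝ u x‖ := by
    intro x; simp [gradient]
  have key := aux_one_dim w hw hwc r hr
  have hpt : ∀ x : E3, x ≠ 0 → deriv w ‖x‖ ^ 2 ≤ ‖fderiv ℝ u x‖ ^ 2 := by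
    intro x hx
    have hn : 0 < ‖x‖ := norm_pos_iff.mpr hx
    set f : E3 := ‖x‖⁻¹ • x with hf
    have hfn : ‖f‖ = 1 := by simp [hf, norm_smul, hn.ne']
    have hxf : ‖x‖ • f = x := by simp [hf, smul_smul, hn.ne']
    have hev : w =ᶠ[nhds ‖x‖] fun t => u (t • f) := by
      filter_upwards [lt_mem_nhds hn] with t ht
      rw [hwv t ht.le, huv, norm_smul, hfn, Real.norm_of_nonneg ht.le, mul_one]
    have hd : HasDerivAt (fun t : ℝ => u (t • f)) (fderiv ℝ u x f) ‖x‖ := by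
      have h1 : HasFDerivAt u (fderiv ℝ u x) (‖x‖ • f) := by
        rw [hxf]; exact (hu1.differentiable (by simp) x).hasFDerivAt
      have h2 : HasDerivAt (fun t : ℝ => t • f) f ‖x‖ := by
        simpa using (hasDerivAt_id ‖x‖).smul_const f
      exact h1.comp_hasDerivAt _ h2
    rw [hev.deriv_eq, hd.deriv, sq_le_sq, abs_norm]
    simpa [hfn] using (fderiv ℝ u x).le_opNorm f
  have hint : ∫ x : E3, (w ‖x‖ ^ 2 + deriv w ‖x‖ ^ 2) =
      c * ∫ t in Set.Ioi (0:ℝ), t ^ 2 * (w t ^ 2 + deriv w t ^ 2) := by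
    rw [integral_fun_norm_addHaar volume (fun t => w t ^ 2 + deriv w t ^ 2)]
    simp [hcdef, smul_eq_mul, mul_assoc]
  have hfc : Continuous (fderiv ℝ u) := hu1.continuous_fderiv (by simp)
  have hR : Integrable (fun x : E3 => u x ^ 2 + ‖gradient u x‖ ^ 2) := by
    simp_rw [hgrad]
    apply Continuous.integrable_of_hasCompactSupport
    · exact (hu1.continuous.pow 2).add (hfc.norm.pow 2)
    · apply HasCompactSupport.add
      · exact hcs.comp_left (g := fun y : ℝ => y ^ 2) (by simp)
      · exact (hcs.fderiv ℝ).comp_left (g := fun y => ‖y‖ ^ 2) (by simp)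
  have hle : ∫ x : E3, (w ‖x‖ ^ 2 + deriv w ‖x‖ ^ 2) ≤
      ∫ x : E3, ((u x) ^ 2 + ‖gradient u x‖ ^ 2) := by
    apply integral_mono_of_nonneg (Eventually.of_forall fun x => by positivity) hR
    have : ∀ᵐ x : E3, x ≠ 0 := Measure.ae_ne volume 0
    filter_upwards [this] with x hx
    simp only [hgrad]
    rw [hwv _ (norm_nonneg x), ← huv]
    have := hpt x hx
    linarith
  rw [← hwv r hr, ← Real.sqrt_mul (by positivity)]
  apply Real.le_sqrt_of_sq_le
  rw [inv_mul_eq_div, le_div_iff₀ hc0]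
  calc _ ≤ _ := mul_le_mul_of_nonneg_right key hc0.le
    _ = _ := by rw [hint, mul_comm]
    _ ≤ _ := hle

end
end

section
/- Let f : ℝ → ℝ be continuous with f(0) = 0. Let φ : [0,∞)×(0,∞) → ℝ be smooth, with r ↦ φ(t,r) compactly supported in (0,∞) for each t, satisfying ∂ₜ²φ = ∂ᵣ²φ + (2/r)∂ᵣφ − f(φ), and suppose sup_{t≥0} ∫₀^∞ ( r²((∂ₜφ)² + (∂ᵣφ)²)(t,r) ) dr < ∞. Then with the weight ψ(r) = r²/(1+r), the virial functional I(t) = ∫₀^∞ [ (r²/(1+r)) ∂ᵣφ ∂ₜφ + ( r(r+2)/(2(1+r)²) ) φ ∂ₜφ ] dr is well-defined, and there is a constant C > 0 (independent of t) such that |I(t)| ≤ C · sup_{s≥0} ∫₀^∞ r²((∂ₜφ)² + (∂ᵣφ)²)(s,r) dr for all t ≥ 0. -/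
open MeasureTheory Filter

noncomputable section

/-- First time derivative `∂ₜφ`. -/
def pt (φ : ℝ → ℝ → ℝ) (t r : ℝ) : ℝ := deriv (fun s => φ s r) t

/-- Radial derivative `∂ᵣφ`. -/
def pr (φ : ℝ → ℝ → ℝ) (t r : ℝ) : ℝ := deriv (fun ρ => φ t ρ) r

/-- Second time derivative `∂ₜ²φ`. -/
def ptt (φ : ℝ → ℝ → ℝ) (t r : ℝ) : ℝ := deriv (fun s => pt φ s r) t

/-- Second radial derivative `∂ᵣ²φ`. -/
def prr (φ : ℝ → ℝ → ℝ) (t r : ℝ) : ℝ := deriv (fun ρ => pr φ t ρ) r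

/-- The radial profile `r ↦ φ t r` is compactly supported inside `(0,∞)` for each `t`. -/
def SuppIn (φ : ℝ → ℝ → ℝ) : Prop :=
  ∀ t : ℝ, ∃ a b : ℝ, 0 < a ∧ ∀ r : ℝ, r < a ∨ b < r → φ t r = 0


theorem pt_eq_aux (φ : ℝ → ℝ → ℝ) (hφ : ContDiff ℝ (⊤ : ℕ∞) (Function.uncurry φ)) (t r : ℝ) :
    HasDerivAt (fun s => φ s r) (fderiv ℝ (Function.uncurry φ) (t, r) (1, 0)) t := by
  have h1 : HasFDerivAt (Function.uncurry φ) (fderiv ℝ (Function.uncurry φ) (t, r)) (t, r) :=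
    (hφ.differentiable (by simp) (t, r)).hasFDerivAt
  have h2 : HasDerivAt (fun s : ℝ => (s, r)) ((1 : ℝ), (0 : ℝ)) t :=
    (hasDerivAt_id t).prodMk (hasDerivAt_const t r)
  exact h1.comp_hasDerivAt t h2

theorem pr_eq_aux (φ : ℝ → ℝ → ℝ) (hφ : ContDiff ℝ (⊤ : ℕ∞) (Function.uncurry φ)) (t r : ℝ) :
    HasDerivAt (fun s => φ t s) (fderiv ℝ (Function.uncurry φ) (t, r) (0, 1)) r := by
  have h1 : HasFDerivAt (Function.uncurry φ) (fderiv ℝ (Function.uncurry φ) (t, r)) (t, r) :=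
    (hφ.differentiable (by simp) (t, r)).hasFDerivAt
  have h2 : HasDerivAt (fun s : ℝ => (t, s)) ((0 : ℝ), (1 : ℝ)) r :=
    (hasDerivAt_const r t).prodMk (hasDerivAt_id r)
  exact h1.comp_hasDerivAt r h2

theorem pt_cont_aux (φ : ℝ → ℝ → ℝ) (hφ : ContDiff ℝ (⊤ : ℕ∞) (Function.uncurry φ)) :
    Continuous (fun p : ℝ × ℝ => pt φ p.1 p.2) := by
  have : (fun p : ℝ × ℝ => pt φ p.1 p.2) =
      fun p => fderiv ℝ (Function.uncurry φ) p (1, 0) := by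
    funext p
    exact (pt_eq_aux φ hφ p.1 p.2).deriv
  rw [this]
  exact (hφ.continuous_fderiv (by simp)).clm_apply continuous_const

theorem pr_cont_aux (φ : ℝ → ℝ → ℝ) (hφ : ContDiff ℝ (⊤ : ℕ∞) (Function.uncurry φ)) :
    Continuous (fun p : ℝ × ℝ => pr φ p.1 p.2) := by
  have : (fun p : ℝ × ℝ => pr φ p.1 p.2) =
      fun p => fderiv ℝ (Function.uncurry φ) p (0, 1) := by
    funext p
    exact (pr_eq_aux φ hφ p.1 p.2).deriv
  rw [this]
  exact (hφ.continuous_fderiv (by simp)).clm_apply continuous_const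

theorem pr_zero_aux (φ : ℝ → ℝ → ℝ) (t b : ℝ) (h : ∀ r, b < r → φ t r = 0) (r : ℝ) (hr : b < r) :
    pr φ t r = 0 := by
  have : (fun ρ => φ t ρ) =ᶠ[nhds r] fun _ => (0 : ℝ) := by
    filter_upwards [lt_mem_nhds hr] with ρ hρ using h ρ hρ
  unfold pr
  rw [this.deriv_eq]
  simp

/-- Localised energy bound at every nonnegative time (Baire category argument). -/
theorem energy_loc_aux (φ : ℝ → ℝ → ℝ) (hφ : ContDiff ℝ (⊤ : ℕ∞) (Function.uncurry φ))
    (hsupp : SuppIn φ) (S : ℝ)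
    (hS : ∀ t : ℝ, 0 ≤ t →
      (∫ r in Set.Ioi (0:ℝ), r ^ 2 * ((pt φ t r) ^ 2 + (pr φ t r) ^ 2)) ≤ S)
    (R : ℝ) (hR : 0 ≤ R) (t : ℝ) (ht : 0 ≤ t) :
    (∫ r in (0:ℝ)..R, r ^ 2 * ((pt φ t r) ^ 2 + (pr φ t r) ^ 2)) ≤ S := by
  have hpt := pt_cont_aux φ hφ
  have hpr := pr_cont_aux φ hφ
  have hc2 : Continuous (fun p : ℝ × ℝ =>
      p.2 ^ 2 * ((pt φ p.1 p.2) ^ 2 + (pr φ p.1 p.2) ^ 2)) := by fun_prop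
  let T : ℕ → Set ℝ := fun n => {s | ∀ r : ℝ, (n : ℝ) < r → φ s r = 0}
  have hTc : ∀ n, IsClosed (T n) := by
    intro n
    have : T n = ⋂ r : ℝ, ⋂ _ : (n : ℝ) < r, {s | φ s r = 0} := by
      ext s; simp [T]
    rw [this]
    refine isClosed_iInter fun r => isClosed_iInter fun _ => ?_
    have hc : Continuous fun s => φ s r :=
      hφ.continuous.comp (continuous_id.prodMk continuous_const)
    exact isClosed_eq hc continuous_const
  have hTu : ⋃ n, T n = Set.univ := by
    refine Set.eq_univ_of_forall fun s => ?_
    obtain ⟨a, b, _, hb⟩ := hsupp s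
    obtain ⟨n, hn⟩ := exists_nat_ge b
    exact Set.mem_iUnion.2 ⟨n, fun r hr => hb r (Or.inr (lt_of_le_of_lt hn hr))⟩
  have hD : Dense (⋃ n, interior (T n)) := dense_iUnion_interior_of_closed hTc hTu
  have hgood : ∀ s ∈ Set.Ioi (0:ℝ) ∩ ⋃ n, interior (T n),
      (∫ r in (0:ℝ)..R, r ^ 2 * ((pt φ s r) ^ 2 + (pr φ s r) ^ 2)) ≤ S := by
    rintro s ⟨hs0, hs⟩
    obtain ⟨n, hn⟩ := Set.mem_iUnion.1 hs
    have hcs : Continuous (fun r : ℝ => r ^ 2 * ((pt φ s r) ^ 2 + (pr φ s r) ^ 2)) :=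
      hc2.comp (continuous_const.prodMk continuous_id)
    have hz : ∀ r : ℝ, (n : ℝ) < r → r ^ 2 * ((pt φ s r) ^ 2 + (pr φ s r) ^ 2) = 0 := by
      intro r hr
      have h1 : pr φ s r = 0 := pr_zero_aux φ s n (interior_subset hn) r hr
      have h2 : pt φ s r = 0 := by
        have : (fun σ => φ σ r) =ᶠ[nhds s] fun _ => (0 : ℝ) := by
          filter_upwards [mem_interior_iff_mem_nhds.1 hn] with σ hσ using hσ r hr
        unfold pt
        rw [this.deriv_eq]
        simp
      simp [h1, h2]
    have hint : IntegrableOn (fun r : ℝ => r ^ 2 * ((pt φ s r) ^ 2 + (pr φ s r) ^ 2))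
        (Set.Ioi 0) := by
      refine IntegrableOn.of_forall_diff_eq_zero (s := Set.Ioc 0 (n:ℝ))
        (hcs.integrableOn_Ioc) measurableSet_Ioi ?_
      rintro r ⟨hr0, hr1⟩
      apply hz
      by_contra hcon
      exact hr1 ⟨hr0, not_lt.1 hcon⟩
    rw [intervalIntegral.integral_of_le hR]
    refine le_trans (setIntegral_mono_set hint ?_ ?_) (hS s (le_of_lt hs0))
    · exact Eventually.of_forall fun r => by positivity
    · exact Set.Ioc_subset_Ioi_self.eventuallyLE
  have hcont : Continuous fun s => ∫ r in (0:ℝ)..R, r ^ 2 * ((pt φ s r) ^ 2 + (pr φ s r) ^ 2) :=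
    intervalIntegral.continuous_parametric_intervalIntegral_of_continuous' hc2 0 R
  have hcl : IsClosed {s | (∫ r in (0:ℝ)..R, r ^ 2 * ((pt φ s r) ^ 2 + (pr φ s r) ^ 2)) ≤ S} :=
    isClosed_le hcont continuous_const
  have h1 : closure (Set.Ioi (0:ℝ) ∩ ⋃ n, interior (T n)) ⊆ _ := closure_minimal hgood hcl
  have h2 : Set.Ioi (0:ℝ) ⊆ closure (Set.Ioi (0:ℝ) ∩ ⋃ n, interior (T n)) :=
    hD.open_subset_closure_inter isOpen_Ioi
  have h3 : closure (Set.Ioi (0:ℝ)) ⊆ closure (Set.Ioi (0:ℝ) ∩ ⋃ n, interior (T n)) :=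
    closure_minimal h2 isClosed_closure
  rw [closure_Ioi] at h3
  exact h1 (h3 ht)

theorem pointwise_aux (r u p q : ℝ) (hr : 0 ≤ r) :
    |(r ^ 2 / (1 + r)) * p * q + (r * (r + 2) / (2 * (1 + r) ^ 2)) * (u * q)| ≤
      3 * (r ^ 2 * (q ^ 2 + p ^ 2)) + (u ^ 2 + 2 * r * (u * p)) := by
  have hw1 : r ^ 2 / (1 + r) ≤ r ^ 2 := div_le_self (by positivity) (by linarith)
  have hw2 : r * (r + 2) / (2 * (1 + r) ^ 2) ≤ r := by
    rw [div_le_iff₀ (by positivity)]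
    nlinarith [mul_nonneg hr hr, mul_nonneg (mul_nonneg hr hr) hr]
  have hw10 : 0 ≤ r ^ 2 / (1 + r) := by positivity
  have hw20 : 0 ≤ r * (r + 2) / (2 * (1 + r) ^ 2) := by positivity
  have e1 : |(r ^ 2 / (1 + r)) * p * q| ≤ r ^ 2 * |p * q| := by
    rw [mul_assoc, abs_mul, abs_of_nonneg hw10]
    gcongr
  have e2 : |(r * (r + 2) / (2 * (1 + r) ^ 2)) * (u * q)| ≤ r * |u * q| := by
    rw [abs_mul, abs_of_nonneg hw20]
    gcongr
  have e3 : |p * q| ≤ (p ^ 2 + q ^ 2) / 2 := by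
    rw [abs_le]; constructor <;> nlinarith [sq_nonneg (p + q), sq_nonneg (p - q)]
  have e4 : r * |u * q| ≤ (u ^ 2 + r ^ 2 * q ^ 2) / 2 := by
    have : r * |u * q| = |u * (r * q)| := by
      rw [show u * (r * q) = r * (u * q) by ring, abs_mul r, abs_of_nonneg hr]
    rw [this, abs_le]
    constructor <;> nlinarith [sq_nonneg (u + r * q), sq_nonneg (u - r * q)]
  have e5 : r ^ 2 * |p * q| ≤ r ^ 2 * ((p ^ 2 + q ^ 2) / 2) := by gcongr
  have e6 := abs_add_le ((r ^ 2 / (1 + r)) * p * q) ((r * (r + 2) / (2 * (1 + r) ^ 2)) * (u * q))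
  nlinarith [sq_nonneg (u + 2 * r * p), sq_nonneg (r * q), sq_nonneg (r * p)]

/-- With the weight `ψ(r) = r²/(1+r)`, the virial functional
`I(t) = ∫₀^∞ (r²/(1+r)) ∂ᵣφ ∂ₜφ + (r(r+2)/(2(1+r)²)) φ ∂ₜφ dr` is well defined and
uniformly bounded in time by the energy. -/
theorem virial_I_bounded
    (f : ℝ → ℝ) (hf : Continuous f) (hf0 : f 0 = 0)
    (φ : ℝ → ℝ → ℝ) (hφ : ContDiff ℝ (⊤ : ℕ∞) (Function.uncurry φ))
    (hsupp : SuppIn φ)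
    (heq : ∀ t : ℝ, 0 ≤ t → ∀ r : ℝ, 0 < r →
      ptt φ t r = prr φ t r + (2 / r) * pr φ t r - f (φ t r))
    (S : ℝ)
    (hS : ∀ t : ℝ, 0 ≤ t →
      (∫ r in Set.Ioi (0:ℝ), r ^ 2 * ((pt φ t r) ^ 2 + (pr φ t r) ^ 2)) ≤ S) :
    ∃ C : ℝ, 0 < C ∧ ∀ t : ℝ, 0 ≤ t →
      IntegrableOn (fun r : ℝ =>
          (r ^ 2 / (1 + r)) * pr φ t r * pt φ t r
            + (r * (r + 2) / (2 * (1 + r) ^ 2)) * (φ t r * pt φ t r)) (Set.Ioi (0:ℝ)) ∧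
      |∫ r in Set.Ioi (0:ℝ),
          ((r ^ 2 / (1 + r)) * pr φ t r * pt φ t r
            + (r * (r + 2) / (2 * (1 + r) ^ 2)) * (φ t r * pt φ t r))| ≤ C * S := by
  refine ⟨3, by norm_num, fun t ht => ?_⟩
  have hpt : Continuous fun r => pt φ t r :=
    (pt_cont_aux φ hφ).comp (continuous_const.prodMk continuous_id)
  have hpr : Continuous fun r => pr φ t r :=
    (pr_cont_aux φ hφ).comp (continuous_const.prodMk continuous_id)
  have hu : Continuous fun r => φ t r :=
    hφ.continuous.comp (continuous_const.prodMk continuous_id)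
  obtain ⟨a, b, ha, hab⟩ := hsupp t
  have hb : ∀ r, b < r → φ t r = 0 := fun r hr => hab r (Or.inr hr)
  set R : ℝ := max b 0 + 1 with hRdef
  have hbR : b < R := lt_of_le_of_lt (le_max_left b 0) (lt_add_one _)
  have hR0 : 0 < R := lt_of_le_of_lt (le_max_right b 0) (lt_add_one _)
  set g : ℝ → ℝ := fun r : ℝ =>
          (r ^ 2 / (1 + r)) * pr φ t r * pt φ t r
            + (r * (r + 2) / (2 * (1 + r) ^ 2)) * (φ t r * pt φ t r) with hg
  have hgz : ∀ r ∈ Set.Ioi (0:ℝ) \ Set.Ioc 0 R, g r = 0 := by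
    rintro r ⟨hr0, hr1⟩
    have hr : R < r := by
      by_contra hcon
      exact hr1 ⟨hr0, not_lt.1 hcon⟩
    simp [hg, pr_zero_aux φ t b hb r (hbR.trans hr), hb r (hbR.trans hr)]
  have hgc : ContinuousOn g (Set.Icc 0 R) := by
    have h1 : ∀ r ∈ Set.Icc 0 R, 1 + r ≠ 0 := fun r hr => by linarith [hr.1]
    have h2 : ∀ r ∈ Set.Icc 0 R, 2 * (1 + r) ^ 2 ≠ 0 := fun r hr => by
      have := h1 r hr
      positivity
    refine ContinuousOn.add (ContinuousOn.mul (ContinuousOn.mul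
      (ContinuousOn.div (by fun_prop) (by fun_prop) h1) hpr.continuousOn) hpt.continuousOn)
      (ContinuousOn.mul (ContinuousOn.div (by fun_prop) (by fun_prop) h2)
        (hu.mul hpt).continuousOn)
  have hgi : IntegrableOn g (Set.Ioc 0 R) :=
    (hgc.integrableOn_Icc).mono_set Set.Ioc_subset_Icc_self
  refine ⟨hgi.of_forall_diff_eq_zero measurableSet_Ioi hgz, ?_⟩
  rw [setIntegral_eq_of_subset_of_forall_diff_eq_zero measurableSet_Ioi
    Set.Ioc_subset_Ioi_self hgz, ← intervalIntegral.integral_of_le hR0.le]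
  have hgint : IntervalIntegrable g volume 0 R :=
    (intervalIntegrable_iff_integrableOn_Ioc_of_le hR0.le).2 hgi
  have hF : (∫ r in (0:ℝ)..R, ((φ t r) ^ 2 + 2 * r * (φ t r * pr φ t r))) = 0 := by
    have hder : ∀ r ∈ Set.uIcc 0 R, HasDerivAt (fun r => r * (φ t r) ^ 2)
        ((φ t r) ^ 2 + 2 * r * (φ t r * pr φ t r)) r := by
      intro r _
      have h := pr_eq_aux φ hφ t r
      have h' : HasDerivAt (fun s => φ t s) (pr φ t r) r := h.differentiableAt.hasDerivAt
      have h2 := (hasDerivAt_id r).mul (h'.pow 2)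
      refine h2.congr_deriv ?_
      simp
      ring
    rw [intervalIntegral.integral_eq_sub_of_hasDerivAt hder
      (Continuous.intervalIntegrable (by fun_prop) _ _)]
    simp [hb R hbR]
  have hle : (∫ r in (0:ℝ)..R, |g r|) ≤
      ∫ r in (0:ℝ)..R, (3 * (r ^ 2 * ((pt φ t r) ^ 2 + (pr φ t r) ^ 2)) +
        ((φ t r) ^ 2 + 2 * r * (φ t r * pr φ t r))) := by
    refine intervalIntegral.integral_mono_on hR0.le hgint.abs
      (Continuous.intervalIntegrable (by fun_prop) _ _) ?_
    intro r hr
    exact pointwise_aux r (φ t r) (pr φ t r) (pt φ t r) hr.1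
  rw [intervalIntegral.integral_add (Continuous.intervalIntegrable (by fun_prop) _ _)
    (Continuous.intervalIntegrable (by fun_prop) _ _), hF, add_zero,
    intervalIntegral.integral_const_mul] at hle
  have hE := energy_loc_aux φ hφ hsupp S hS R hR0.le t ht
  have habs := intervalIntegral.abs_integral_le_integral_abs (f := g) (μ := volume) hR0.le
  linarith

end
end

section
/- Let f : ℝ → ℝ be of class C¹ with f(0) = 0, and suppose there exist C, δ > 0 with 0 ≤ s f(s) ≤ C s⁴ for all s ∈ (−δ, δ). Then there exists ε₀ > 0 such that the following holds: if φ : [0,∞)×(0,∞) → ℝ is smooth, with r ↦ φ(t,r) compactly supported in (0,∞) for each t, satisfies ∂ₜ²φ = ∂ᵣ²φ + (2/r)∂ᵣφ − f(φ), and the corresponding radial function Φ(t,x) = φ(t,|x|) on ℝ³ satisfies sup_{t≥0} ( (∫_{ℝ³}(Φ² + |∇Φ|²) dx)^{1/2} + sup_x |Φ(t,x)| ) ≤ ε for some ε ≤ ε₀, then ∫₀^∞ ( ∫₀^∞ (r²/(1+r)⁴)( φ² + (∂ᵣφ)² + (∂ₜφ)² )(t,r) dr ) dt < ∞. -/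
open MeasureTheory Filter

noncomputable section

def dd (e : ℝ × ℝ) (V : ℝ × ℝ → ℝ) : ℝ × ℝ → ℝ := fun z => fderiv ℝ V z e

abbrev Smo (V : ℝ × ℝ → ℝ) : Prop := ContDiff ℝ (⊤ : ℕ∞) V

lemma dd_smo {V : ℝ × ℝ → ℝ} (hV : Smo V) (e : ℝ × ℝ) : Smo (dd e V) := by
  have h : ContDiff ℝ (⊤ : ℕ∞) (fderiv ℝ V) := hV.fderiv_right (by simp)
  exact h.clm_apply contDiff_const

lemma dd_line {V : ℝ × ℝ → ℝ} (hV : Smo V) (z e : ℝ × ℝ) (σ : ℝ) :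
    HasDerivAt (fun s : ℝ => V (z + s • e)) (dd e V (z + σ • e)) σ := by
  have h1 : HasFDerivAt V (fderiv ℝ V (z + σ • e)) (z + σ • e) :=
    ((hV.differentiable (by simp)) _).hasFDerivAt
  have h2 : HasDerivAt (fun s : ℝ => z + s • e) e σ := by
    simpa using ((hasDerivAt_id σ).smul_const e).const_add z
  exact h1.comp_hasDerivAt σ h2

lemma dd_t {V : ℝ × ℝ → ℝ} (hV : Smo V) (t r : ℝ) :
    HasDerivAt (fun s : ℝ => V (s, r)) (dd (1, 0) V (t, r)) t := by
  simpa using dd_line hV (0, r) (1, 0) t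

lemma dd_r {V : ℝ × ℝ → ℝ} (hV : Smo V) (t r : ℝ) :
    HasDerivAt (fun s : ℝ => V (t, s)) (dd (0, 1) V (t, r)) r := by
  simpa using dd_line hV (t, 0) (0, 1) r

lemma dd_add (V : ℝ × ℝ → ℝ) (e f : ℝ × ℝ) : dd (e + f) V = fun z => dd e V z + dd f V z := by
  funext z; simp [dd]

lemma dd_dd {V : ℝ × ℝ → ℝ} (hV : Smo V) (e f z : ℝ × ℝ) :
    dd e (dd f V) z = fderiv ℝ (fderiv ℝ V) z e f := by
  have h : ContDiff ℝ (⊤ : ℕ∞) (fderiv ℝ V) := hV.fderiv_right (by simp)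
  have h1 : HasFDerivAt (fderiv ℝ V) (fderiv ℝ (fderiv ℝ V) z) z :=
    ((h.differentiable (by simp)) _).hasFDerivAt
  have h2 := h1.clm_apply (hasFDerivAt_const f z)
  show fderiv ℝ (fun z => fderiv ℝ V z f) z e = _
  rw [h2.fderiv]
  simp

lemma dd_symm {V : ℝ × ℝ → ℝ} (hV : Smo V) (e f z : ℝ × ℝ) :
    dd e (dd f V) z = dd f (dd e V) z := by
  rw [dd_dd hV, dd_dd hV]
  have : ContDiffAt ℝ (⊤ : ℕ∞) V z := hV.contDiffAt
  exact (this.isSymmSndFDerivAt (by simpa using (WithTop.coe_le_coe.2 le_top : ((2:ℕ∞) : WithTop ℕ∞) ≤ ((⊤:ℕ∞) : WithTop ℕ∞)))) e f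

lemma box {V : ℝ × ℝ → ℝ} (hV : Smo V) (a b c d : ℝ) (z : ℝ × ℝ) :
    dd (a, b) (dd (c, d) V) z = a * c * dd (1, 0) (dd (1, 0) V) z
      + (a * d + b * c) * dd (1, 0) (dd (0, 1) V) z + b * d * dd (0, 1) (dd (0, 1) V) z := by
  have h := dd_symm hV (1, 0) (0, 1) z
  simp only [dd_dd hV] at h ⊢
  have e1 : ((a, b) : ℝ × ℝ) = a • (1, 0) + b • (0, 1) := by simp
  have e2 : ((c, d) : ℝ × ℝ) = c • (1, 0) + d • (0, 1) := by simp
  rw [e1, e2]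
  simp only [map_add, map_smul, add_apply, smul_apply,
    smul_eq_mul]
  rw [h]; ring

lemma gron {h h' : ℝ → ℝ} {A l s : ℝ} (hA : 0 ≤ A) (hl : 0 < l) (hs : 0 ≤ s)
    (hd : ∀ σ, HasDerivAt h (h' σ) σ) (h0 : h 0 = 0)
    (hb : ∀ σ, 0 ≤ σ → σ ≤ s → |h' σ| ≤ A * Real.exp (l * σ)) :
    |h s| ≤ A / l * Real.exp (l * s) := by
  have := image_norm_le_of_norm_deriv_right_le_deriv_boundary (f := h) (f' := h') (a := 0) (b := s)
    (B := fun σ => A / l * Real.exp (l * σ)) (B' := fun σ => A * Real.exp (l * σ))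
    (fun x _ => (hd x).continuousAt.continuousWithinAt)
    (fun x _ => (hd x).hasDerivWithinAt)
    (by simp [h0]; positivity)
    (fun x => by
      have := ((Real.hasDerivAt_exp (l * x)).comp x ((hasDerivAt_id x).const_mul l)).const_mul (A / l)
      have h2 : A / l * (Real.exp (l * x) * (l * 1)) = A * Real.exp (l * x) := by field_simp
      rw [h2] at this
      exact this)
    (fun x hx => hb x hx.1 hx.2.le)
  simpa using this (Set.right_mem_Icc.2 hs)

lemma uniq {V : ℝ × ℝ → ℝ} (hV : Smo V) (z e f : ℝ × ℝ) (K s0 : ℝ) (hK : 0 ≤ K) (hs0 : 0 ≤ s0)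
    (hb : ∀ s x : ℝ, 0 ≤ s → |x| ≤ s0 - s →
      |dd (e - f) (dd (e + f) V) (z + s • e + x • f)| ≤ K * |V (z + s • e + x • f)|)
    (h0 : ∀ x : ℝ, |x| ≤ s0 → V (z + x • f) = 0)
    (h1 : ∀ x : ℝ, |x| ≤ s0 → dd (e + f) V (z + x • f) = 0) :
    V (z + s0 • e) = 0 := by
  set l := K + 1 with hl
  have hlp : 0 < l := by positivity
  set T : Set (ℝ × ℝ) := {p | 0 ≤ p.1 ∧ |p.2| ≤ s0 - p.1} with hT
  have hTc : IsCompact T := by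
    apply IsCompact.of_isClosed_subset (isCompact_Icc (a := ((0, -s0) : ℝ × ℝ)) (b := (s0, s0)))
    · exact (isClosed_le (f := fun _ : ℝ × ℝ => (0:ℝ)) (g := fun p => p.1)
        (by fun_prop) (by fun_prop)).inter
        (isClosed_le (f := fun p : ℝ × ℝ => |p.2|) (g := fun p => s0 - p.1)
          (by fun_prop) (by fun_prop))
    · rintro ⟨a, b⟩ ⟨h, h'⟩
      simp only at h h'
      have := abs_nonneg b
      rw [abs_le] at h'
      exact ⟨⟨h, by simp; linarith⟩, ⟨by simp; linarith, by simp; linarith⟩⟩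
  have hVc : Continuous V := hV.continuous
  obtain ⟨m, hm, hmax⟩ := hTc.exists_isMaxOn (f := fun p : ℝ × ℝ =>
      Real.exp (-(l * p.1)) * |V (z + p.1 • e + p.2 • f)|) ⟨(s0, 0), by simp [hT, hs0]⟩
      (by fun_prop)
  set M := Real.exp (-(l * m.1)) * |V (z + m.1 • e + m.2 • f)| with hM
  have hM0 : 0 ≤ M := by positivity
  have bV : ∀ s x : ℝ, 0 ≤ s → |x| ≤ s0 - s → |V (z + s • e + x • f)| ≤ M * Real.exp (l * s) := by
    intro s x hs hx
    have : Real.exp (-(l * s)) * |V (z + s • e + x • f)| ≤ M := hmax (a := (s, x)) ⟨hs, hx⟩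
    rw [Real.exp_neg, inv_mul_le_iff₀ (Real.exp_pos _)] at this
    linarith
  have bp : ∀ s x : ℝ, 0 ≤ s → |x| ≤ s0 - s →
      |dd (e + f) V (z + s • e + x • f)| ≤ K * M / l * Real.exp (l * s) := by
    intro s x hs hx
    have key : ∀ σ : ℝ, (z + (x + s) • f) + σ • (e - f) = z + σ • e + (x + s - σ) • f := by
      intro σ; module
    have := gron (h := fun σ => dd (e + f) V ((z + (x + s) • f) + σ • (e - f)))
      (h' := fun σ => dd (e - f) (dd (e + f) V) ((z + (x + s) • f) + σ • (e - f)))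
      (A := K * M) (by positivity) hlp hs (fun σ => dd_line (dd_smo hV _) _ _ σ)
      (by
        simp only [zero_smul, add_zero]
        apply h1
        rw [abs_le] at hx ⊢; constructor <;> linarith)
      (fun σ h h' => by
        have hx' : |x + s - σ| ≤ s0 - σ := by rw [abs_le] at hx ⊢; constructor <;> linarith
        simp only [key]
        refine (hb σ _ h hx').trans ?_
        rw [mul_assoc]
        exact mul_le_mul_of_nonneg_left (bV σ _ h hx') hK)
    simp only [key] at this
    simpa using this
  have bV2 : ∀ s x : ℝ, 0 ≤ s → |x| ≤ s0 - s →
      |V (z + s • e + x • f)| ≤ K * M / l / l * Real.exp (l * s) := by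
    intro s x hs hx
    have key : ∀ σ : ℝ, (z + (x - s) • f) + σ • (e + f) = z + σ • e + (x - s + σ) • f := by
      intro σ; module
    have := gron (h := fun σ => V ((z + (x - s) • f) + σ • (e + f)))
      (h' := fun σ => dd (e + f) V ((z + (x - s) • f) + σ • (e + f)))
      (A := K * M / l) (by positivity) hlp hs (fun σ => dd_line hV _ _ σ)
      (by
        simp only [zero_smul, add_zero]
        apply h0
        rw [abs_le] at hx ⊢; constructor <;> linarith)
      (fun σ h h' => by
        have hx' : |x - s + σ| ≤ s0 - σ := by rw [abs_le] at hx ⊢; constructor <;> linarith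
        simp only [key]
        exact bp σ _ h hx')
    simp only [key] at this
    simpa using this
  have hMM : M ≤ K * M / l / l := by
    have := bV2 m.1 m.2 hm.1 hm.2
    have h2 : M ≤ Real.exp (-(l * m.1)) * (K * M / l / l * Real.exp (l * m.1)) :=
      mul_le_mul_of_nonneg_left this (Real.exp_pos _).le
    rw [Real.exp_neg, mul_comm, mul_assoc, mul_inv_cancel₀ (Real.exp_pos _).ne'] at h2
    linarith
  have hM1 : M = 0 := by
    rw [div_div, le_div_iff₀ (by positivity)] at hMM
    have h3 : M * (l * l - K) ≤ 0 := by linarith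
    have h4 : 0 < l * l - K := by rw [hl]; nlinarith
    by_contra h
    have : 0 < M := lt_of_le_of_ne hM0 (Ne.symm h)
    have := mul_pos this h4
    linarith
  have := bV s0 0 hs0 (by simp)
  rw [hM1] at this
  simpa using this

def vv (φ : ℝ → ℝ → ℝ) : ℝ × ℝ → ℝ := fun z => z.2 * φ z.1 z.2

lemma vv_smo {φ : ℝ → ℝ → ℝ} (hφ : Smo (Function.uncurry φ)) : Smo (vv φ) := by
  have : vv φ = fun z => z.2 * Function.uncurry φ z := by funext z; rfl
  rw [Smo, this]
  exact contDiff_snd.mul hφ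

lemma pt_has {φ : ℝ → ℝ → ℝ} (hφ : Smo (Function.uncurry φ)) (t r : ℝ) :
    HasDerivAt (fun s => φ s r) (pt φ t r) t :=
  (dd_t hφ t r).differentiableAt.hasDerivAt

lemma pr_has {φ : ℝ → ℝ → ℝ} (hφ : Smo (Function.uncurry φ)) (t r : ℝ) :
    HasDerivAt (fun s => φ t s) (pr φ t r) r :=
  (dd_r hφ t r).differentiableAt.hasDerivAt

lemma pt_eq {φ : ℝ → ℝ → ℝ} (hφ : Smo (Function.uncurry φ)) :
    Function.uncurry (pt φ) = dd (1, 0) (Function.uncurry φ) := by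
  funext ⟨t, r⟩
  exact (dd_t hφ t r).deriv

lemma pr_eq {φ : ℝ → ℝ → ℝ} (hφ : Smo (Function.uncurry φ)) :
    Function.uncurry (pr φ) = dd (0, 1) (Function.uncurry φ) := by
  funext ⟨t, r⟩
  exact (dd_r hφ t r).deriv

lemma pt_smo {φ : ℝ → ℝ → ℝ} (hφ : Smo (Function.uncurry φ)) : Smo (Function.uncurry (pt φ)) := by
  rw [pt_eq hφ]; exact dd_smo hφ _

lemma pr_smo {φ : ℝ → ℝ → ℝ} (hφ : Smo (Function.uncurry φ)) : Smo (Function.uncurry (pr φ)) := by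
  rw [pr_eq hφ]; exact dd_smo hφ _

lemma vt {φ : ℝ → ℝ → ℝ} (hφ : Smo (Function.uncurry φ)) (t r : ℝ) :
    dd (1, 0) (vv φ) (t, r) = r * pt φ t r :=
  (dd_t (vv_smo hφ) t r).unique ((pt_has hφ t r).const_mul r)

lemma vr {φ : ℝ → ℝ → ℝ} (hφ : Smo (Function.uncurry φ)) (t r : ℝ) :
    dd (0, 1) (vv φ) (t, r) = φ t r + r * pr φ t r := by
  have h := (dd_r (vv_smo hφ) t r).unique ((hasDerivAt_id r).mul (pr_has hφ t r))
  simpa using h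

lemma vtt {φ : ℝ → ℝ → ℝ} (hφ : Smo (Function.uncurry φ)) (t r : ℝ) :
    dd (1, 0) (dd (1, 0) (vv φ)) (t, r) = r * ptt φ t r := by
  have h := dd_t (dd_smo (vv_smo hφ) (1, 0)) t r
  simp only [vt hφ] at h
  exact h.unique ((pt_has (pt_smo hφ) t r).const_mul r)

lemma vrr {φ : ℝ → ℝ → ℝ} (hφ : Smo (Function.uncurry φ)) (t r : ℝ) :
    dd (0, 1) (dd (0, 1) (vv φ)) (t, r) = 2 * pr φ t r + r * prr φ t r := by
  have h := dd_r (dd_smo (vv_smo hφ) (0, 1)) t r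
  simp only [vr hφ] at h
  have := h.unique ((pr_has hφ t r).add ((hasDerivAt_id r).mul (pr_has (pr_smo hφ) t r)))
  rw [this]
  show _ + (1 * _ + _ * _) = _
  simp only [id]
  show pr φ t r + (1 * pr φ t r + r * prr φ t r) = _
  ring

lemma dd_zero_of_open {V : ℝ × ℝ → ℝ} {S : Set (ℝ × ℝ)} (hS : IsOpen S)
    (h : ∀ z ∈ S, V z = 0) (e : ℝ × ℝ) : ∀ z ∈ S, dd e V z = 0 := by
  intro z hz
  have : V =ᶠ[nhds z] fun _ => 0 := by
    filter_upwards [hS.mem_nhds hz] with y hy using h y hy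
  simp [dd, this.fderiv_eq]

lemma zero_neg {φ : ℝ → ℝ → ℝ} (hs : SuppIn φ) (t r : ℝ) (hr : r ≤ 0) : φ t r = 0 := by
  obtain ⟨a, b, ha, h⟩ := hs t
  exact h r (Or.inl (by linarith))

lemma pr_zero {φ : ℝ → ℝ → ℝ} (hs : SuppIn φ) (t : ℝ) : pr φ t 0 = 0 := by
  obtain ⟨a, b, ha, h⟩ := hs t
  have : (fun ρ => φ t ρ) =ᶠ[nhds 0] fun _ => 0 := by
    filter_upwards [Iio_mem_nhds ha] with y hy using h y (Or.inl hy)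
  simp [pr, this.deriv_eq]

lemma pde {φ : ℝ → ℝ → ℝ} {f : ℝ → ℝ} (hφ : Smo (Function.uncurry φ)) (hs : SuppIn φ)
    (heq : ∀ t : ℝ, 0 ≤ t → ∀ r : ℝ, 0 < r →
          ptt φ t r = prr φ t r + (2 / r) * pr φ t r - f (φ t r))
    (t r : ℝ) (ht : 0 ≤ t) (hr : 0 ≤ r) :
    dd (1, 0) (dd (1, 0) (vv φ)) (t, r) - dd (0, 1) (dd (0, 1) (vv φ)) (t, r)
      = - (r * f (φ t r)) := by
  rw [vtt hφ, vrr hφ]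
  rcases hr.eq_or_lt with rfl | hr
  · simp [pr_zero hs]
  · rw [heq t ht r hr]; field_simp; ring

lemma fbound {f : ℝ → ℝ} {C δ : ℝ} (hC : 0 < C) (hδ : 0 < δ) (hf0 : f 0 = 0)
    (hg : ∀ s ∈ Set.Ioo (-δ) δ, 0 ≤ s * f s ∧ s * f s ≤ C * s ^ 4) (s : ℝ) (hs : |s| ≤ δ / 2) :
    |f s| ≤ C * δ ^ 2 * |s| := by
  by_cases h0 : s = 0
  · simp [h0, hf0]
  have hs' := abs_le.1 hs
  obtain ⟨h1, h2⟩ := hg s ⟨by linarith, by linarith⟩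
  have hp : 0 < |s| := abs_pos.2 h0
  have h3 : |s| * |f s| ≤ C * s ^ 4 := by rw [← abs_mul, abs_of_nonneg h1]; exact h2
  have h4 : s ^ 4 = |s| * (|s| ^ 2 * |s|) := by
    have : s ^ 4 = (s^2)^2 := by ring
    rw [this, ← sq_abs s]; ring
  rw [h4] at h3
  have h5 : |f s| ≤ C * (|s| ^ 2 * |s|) := by
    apply le_of_mul_le_mul_left _ hp; linarith
  have h6 : |s| ^ 2 ≤ δ ^ 2 := by apply pow_le_pow_left₀ hp.le; linarith
  calc |f s| ≤ C * (|s| ^ 2 * |s|) := h5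
    _ ≤ C * (δ ^ 2 * |s|) := by gcongr
    _ = _ := by ring

lemma pot_nonneg {f : ℝ → ℝ} {C δ : ℝ} (hδ : 0 < δ)
    (hg : ∀ s ∈ Set.Ioo (-δ) δ, 0 ≤ s * f s ∧ s * f s ≤ C * s ^ 4) (s : ℝ) (hs : |s| ≤ δ / 2) :
    0 ≤ pot f s := by
  have hs' := abs_le.1 hs
  rcases le_total 0 s with h | h
  · unfold pot
    rw [intervalIntegral.integral_of_le h]
    apply setIntegral_nonneg measurableSet_Ioc
    intro x hx
    have := (hg x ⟨by linarith [hx.1], by linarith [hx.2]⟩).1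
    exact nonneg_of_mul_nonneg_right this hx.1
  · unfold pot
    rw [intervalIntegral.integral_symm, intervalIntegral.integral_of_le h,
      integral_Ioc_eq_integral_Ioo, neg_nonneg]
    apply setIntegral_nonpos measurableSet_Ioo
    intro x hx
    have := (hg x ⟨by linarith [hx.1], by linarith [hx.2]⟩).1
    by_contra hc
    push Not at hc
    have := mul_neg_of_neg_of_pos hx.2 hc
    linarith

/-- bundle of what we need about the solution -/
structure Sol (f : ℝ → ℝ) (φ : ℝ → ℝ → ℝ) (K c : ℝ) : Prop where
  smo : Smo (Function.uncurry φ)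
  supp : SuppIn φ
  K0 : 0 ≤ K
  eqn : ∀ t r : ℝ, 0 ≤ t → 0 ≤ r → dd (1, 0) (dd (1, 0) (vv φ)) (t, r)
    - dd (0, 1) (dd (0, 1) (vv φ)) (t, r) = - (r * f (φ t r))
  fb : ∀ t r : ℝ, 0 ≤ t → 0 ≤ r → |f (φ t r)| ≤ K * |φ t r|
  bd : ∀ t r : ℝ, 0 ≤ t → 0 ≤ r → |φ t r| ≤ c
  Fn : ∀ t r : ℝ, 0 ≤ t → 0 ≤ r → 0 ≤ pot f (φ t r)

lemma Sol.bb {f : ℝ → ℝ} {φ : ℝ → ℝ → ℝ} {K c : ℝ} (S : Sol f φ K c) (t r : ℝ) (ht : 0 ≤ t)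
    (hr : 0 ≤ r) : |dd (1, 0) (dd (1, 0) (vv φ)) (t, r)
    - dd (0, 1) (dd (0, 1) (vv φ)) (t, r)| ≤ K * |vv φ (t, r)| := by
  rw [S.eqn t r ht hr, abs_neg, vv, abs_mul, abs_mul]
  have := mul_le_mul_of_nonneg_left (S.fb t r ht hr) (abs_nonneg r)
  simp only; linarith

lemma Sol.left {f : ℝ → ℝ} {φ : ℝ → ℝ → ℝ} {K c : ℝ} (S : Sol f φ K c) (t r : ℝ)
    (hr : 0 ≤ r) (hrt : r ≤ t) : vv φ (t, r) = 0 := by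
  have h := uniq (vv_smo S.smo) (t, 0) (0, 1) (1, 0) K r S.K0 hr
    (by
      intro s x hs hx
      have hx' := abs_le.1 hx
      have := S.bb (t + x) s (by linarith) hs
      have e1 : ((t, 0) : ℝ × ℝ) + s • (0, 1) + x • (1, 0) = (t + x, s) := by simp
      rw [e1]
      have e2 : ((0, 1) : ℝ × ℝ) - (1, 0) = (-1, 1) := by simp
      have e3 : ((0, 1) : ℝ × ℝ) + (1, 0) = (1, 1) := by simp
      rw [e2, e3, box (vv_smo S.smo), ← abs_neg]
      convert this using 2
      ring)
    (by intro x hx; simp [vv])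
    (by
      intro x hx
      have e3 : ((0, 1) : ℝ × ℝ) + (1, 0) = (1, 0) + (0, 1) := by simp
      have e1 : ((t, 0) : ℝ × ℝ) + x • (1, 0) = (t + x, 0) := by simp
      rw [e1, e3, dd_add]
      simp only [vt S.smo, vr S.smo, zero_neg S.supp _ 0 le_rfl]
      simp)
  simpa using h

lemma baire {φ : ℝ → ℝ → ℝ} (hφ : Smo (Function.uncurry φ)) (hs : SuppIn φ) :
    ∃ (t1 : ℝ) (n : ℕ), 0 < t1 ∧ ∀ᶠ t in nhds t1, ∀ r : ℝ, (n : ℝ) < r → φ t r = 0 := by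
  have hcl : ∀ n : ℕ, IsClosed {t : ℝ | ∀ r : ℝ, (n : ℝ) < r → φ (Real.exp t) r = 0} := by
    intro n
    simp only [Set.ofPred_forall]
    refine isClosed_iInter fun r => isClosed_iInter fun _ => ?_
    have : Continuous fun t : ℝ => φ (Real.exp t) r := by
      have h := hφ.continuous
      exact h.comp (f := fun t : ℝ => (Real.exp t, r)) (by fun_prop)
    exact isClosed_eq this continuous_const
  obtain ⟨n, t0, ht0⟩ := nonempty_interior_of_iUnion_of_closed hcl (by
    rw [Set.eq_univ_iff_forall]
    intro t
    obtain ⟨a, b, ha, h⟩ := hs (Real.exp t)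
    obtain ⟨n, hn⟩ := exists_nat_gt b
    exact Set.mem_iUnion.2 ⟨n, fun r hr => h r (Or.inr (by linarith))⟩)
  refine ⟨Real.exp t0, n, Real.exp_pos _, ?_⟩
  have h1 : Tendsto Real.log (nhds (Real.exp t0)) (nhds t0) := by
    have := (Real.continuousAt_log (Real.exp_pos t0).ne').tendsto
    rwa [Real.log_exp] at this
  have h2 := h1.eventually (mem_interior_iff_mem_nhds.1 ht0)
  filter_upwards [h2, Ioi_mem_nhds (Real.exp_pos t0)] with t ht htp r hr
  have := ht r hr
  rwa [Real.exp_log htp] at this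

lemma Sol.right {f : ℝ → ℝ} {φ : ℝ → ℝ → ℝ} {K c : ℝ} (S : Sol f φ K c) :
    ∃ N : ℝ, 0 ≤ N ∧ ∀ t r : ℝ, 0 ≤ t → N + t < r → vv φ (t, r) = 0 := by
  obtain ⟨t1, n, ht1, hn⟩ := baire S.smo S.supp
  obtain ⟨U, hU, hUo, htU⟩ := eventually_nhds_iff.1 hn
  have hop : IsOpen (U ×ˢ Set.Ioi (n : ℝ)) := hUo.prod isOpen_Ioi
  have hz : ∀ z ∈ U ×ˢ Set.Ioi (n : ℝ), vv φ z = 0 := by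
    rintro ⟨t, r⟩ ⟨h1, h2⟩
    simp [vv, hU t h1 r h2]
  have hn0 : (0:ℝ) ≤ n := Nat.cast_nonneg n
  refine ⟨n + t1, by positivity, fun t r ht hr => ?_⟩
  rcases le_total t1 t with h | h
  · have h := uniq (vv_smo S.smo) (t1, r) (1, 0) (0, 1) K (t - t1) S.K0 (by linarith)
      (by
        intro s x hs hx
        have hx' := abs_le.1 hx
        have := S.bb (t1 + s) (r + x) (by linarith) (by linarith)
        have e1 : ((t1, r) : ℝ × ℝ) + s • (1, 0) + x • (0, 1) = (t1 + s, r + x) := by simp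
        rw [e1]
        have e2 : ((1, 0) : ℝ × ℝ) - (0, 1) = (1, -1) := by simp
        have e3 : ((1, 0) : ℝ × ℝ) + (0, 1) = (1, 1) := by simp
        rw [e2, e3, box (vv_smo S.smo)]
        convert this using 2
        ring)
      (by
        intro x hx
        have hx' := abs_le.1 hx
        apply hz
        refine ⟨by simpa using htU, ?_⟩
        simp; linarith)
      (by
        intro x hx
        have hx' := abs_le.1 hx
        apply dd_zero_of_open hop hz
        refine ⟨by simpa using htU, ?_⟩
        simp; linarith)
    simpa using h
  · have h := uniq (vv_smo S.smo) (t1, r) (-1, 0) (0, 1) K (t1 - t) S.K0 (by linarith)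
      (by
        intro s x hs hx
        have hx' := abs_le.1 hx
        have := S.bb (t1 - s) (r + x) (by linarith [abs_nonneg x]) (by linarith)
        have e1 : ((t1, r) : ℝ × ℝ) + s • (-1, 0) + x • (0, 1) = (t1 - s, r + x) := by
          simp; ring
        rw [e1]
        have e2 : ((-1, 0) : ℝ × ℝ) - (0, 1) = (-1, -1) := by simp
        have e3 : ((-1, 0) : ℝ × ℝ) + (0, 1) = (-1, 1) := by simp
        rw [e2, e3, box (vv_smo S.smo)]
        convert this using 2
        ring)
      (by
        intro x hx
        have hx' := abs_le.1 hx
        apply hz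
        refine ⟨by simpa using htU, ?_⟩
        simp; linarith)
      (by
        intro x hx
        have hx' := abs_le.1 hx
        apply dd_zero_of_open hop hz
        refine ⟨by simpa using htU, ?_⟩
        simp; linarith)
    simpa using h

lemma right_dd {V : ℝ × ℝ → ℝ} (hV : Smo V) {N : ℝ}
    (h : ∀ t r : ℝ, 0 ≤ t → N + t < r → V (t, r) = 0) (e : ℝ × ℝ) (t r : ℝ) (ht : 0 ≤ t)
    (hr : N + t < r) : dd e V (t, r) = 0 := by
  have hop : IsOpen {z : ℝ × ℝ | 0 < z.1 ∧ N + z.1 < z.2} :=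
    (isOpen_lt (f := fun _ : ℝ × ℝ => (0:ℝ)) (g := fun z => z.1)
        (by fun_prop) (by fun_prop)).inter
      (isOpen_lt (f := fun z : ℝ × ℝ => N + z.1) (g := fun z => z.2) (by fun_prop) (by fun_prop))
  have h1 := dd_zero_of_open hop (V := V) (fun z hz => h z.1 z.2 hz.1.le hz.2) e
  have hc : Continuous fun τ : ℝ => dd e V (τ, r) :=
    (dd_smo hV e).continuous.comp (f := fun τ : ℝ => (τ, r)) (by fun_prop)
  have h2 : Tendsto (fun τ : ℝ => dd e V (τ, r)) (nhdsWithin t (Set.Ioi t))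
      (nhds (dd e V (t, r))) := (hc.tendsto t).mono_left nhdsWithin_le_nhds
  have h3 : Tendsto (fun τ : ℝ => dd e V (τ, r)) (nhdsWithin t (Set.Ioi t)) (nhds 0) := by
    apply tendsto_const_nhds.congr'
    filter_upwards [Ioo_mem_nhdsGT (show t < r - N by linarith)] with τ hτ
    exact (h1 (τ, r) ⟨by simp; linarith [hτ.1], by simp; linarith [hτ.2]⟩).symm
  exact tendsto_nhds_unique h2 h3

def en (f : ℝ → ℝ) (φ : ℝ → ℝ → ℝ) (z : ℝ × ℝ) : ℝ :=
  ((dd (1, 0) (vv φ) z) ^ 2 + (dd (0, 1) (vv φ) z) ^ 2) / 2 + z.2 ^ 2 * pot f (φ z.1 z.2)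

lemma pot_has {f : ℝ → ℝ} (hf : Continuous f) (s : ℝ) : HasDerivAt (pot f) (f s) s :=
  intervalIntegral.integral_hasDerivAt_right (hf.intervalIntegrable _ _)
    (hf.stronglyMeasurableAtFilter _ _) hf.continuousAt

lemma en_cont {f : ℝ → ℝ} {φ : ℝ → ℝ → ℝ} (hf : Continuous f) (hφ : Smo (Function.uncurry φ)) :
    Continuous (en f φ) := by
  have h1 := (dd_smo (vv_smo hφ) (1, 0)).continuous
  have h2 := (dd_smo (vv_smo hφ) (0, 1)).continuous
  have h3 : Continuous (pot f) :=
    continuous_iff_continuousAt.2 fun s => (pot_has hf s).continuousAt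
  have h4 : Continuous fun z : ℝ × ℝ => φ z.1 z.2 := hφ.continuous
  unfold en
  fun_prop

def mm (φ : ℝ → ℝ → ℝ) (z : ℝ × ℝ) : ℝ :=
  dd (0, 1) (dd (1, 0) (vv φ)) z * dd (0, 1) (vv φ) z
    + dd (1, 0) (vv φ) z * dd (0, 1) (dd (0, 1) (vv φ)) z

lemma mm_cont {φ : ℝ → ℝ → ℝ} (hφ : Smo (Function.uncurry φ)) : Continuous (mm φ) := by
  have h1 := (dd_smo (vv_smo hφ) (1, 0)).continuous
  have h2 := (dd_smo (vv_smo hφ) (0, 1)).continuous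
  have h3 := (dd_smo (dd_smo (vv_smo hφ) (1, 0)) (0, 1)).continuous
  have h4 := (dd_smo (dd_smo (vv_smo hφ) (0, 1)) (0, 1)).continuous
  unfold mm
  fun_prop

lemma Sol.en_has {f : ℝ → ℝ} {φ : ℝ → ℝ → ℝ} {K c : ℝ} (S : Sol f φ K c) (hf : Continuous f)
    (t r : ℝ) (ht : 0 ≤ t) (hr : 0 ≤ r) :
    HasDerivAt (fun s => en f φ (s, r)) (mm φ (t, r)) t := by
  have h1 := dd_t (dd_smo (vv_smo S.smo) (1, 0)) t r
  have h2 := dd_t (dd_smo (vv_smo S.smo) (0, 1)) t r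
  have h3 := (pot_has hf (φ t r)).comp t (pt_has S.smo t r)
  have h := (((h1.pow 2).add (h2.pow 2)).div_const 2).add (h3.const_mul (r ^ 2))
  have he := S.eqn t r ht hr
  have hs := dd_symm (vv_smo S.smo) (1, 0) (0, 1) (t, r)
  have hv := vt S.smo t r
  refine HasDerivAt.congr_deriv (f := fun s => en f φ (s, r)) h ?_
  have he' : dd (1, 0) (dd (1, 0) (vv φ)) (t, r)
    = dd (0, 1) (dd (0, 1) (vv φ)) (t, r) - (r * f (φ t r)) := by linarith
  rw [he', hs, mm, hv]
  push_cast
  ring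

lemma mm_has {φ : ℝ → ℝ → ℝ} (hφ : Smo (Function.uncurry φ)) (t r : ℝ) :
    HasDerivAt (fun s => dd (1, 0) (vv φ) (t, s) * dd (0, 1) (vv φ) (t, s)) (mm φ (t, r)) r :=
  (dd_r (dd_smo (vv_smo hφ) (1, 0)) t r).mul (dd_r (dd_smo (vv_smo hφ) (0, 1)) t r)

lemma Sol.energy {f : ℝ → ℝ} {φ : ℝ → ℝ → ℝ} {K c : ℝ} (S : Sol f φ K c) (hf : Continuous f)
    {N : ℝ} (hN : 0 ≤ N) (h : ∀ t r : ℝ, 0 ≤ t → N + t < r → vv φ (t, r) = 0)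
    (T B : ℝ) (hT : 0 ≤ T) (hB : N + T < B) :
    ∫ r in (0:ℝ)..B, en f φ (T, r) = ∫ r in (0:ℝ)..B, en f φ (0, r) := by
  have hB0 : 0 ≤ B := by linarith
  have hec := en_cont hf S.smo
  have hmc := mm_cont S.smo
  have c1 : ∀ t : ℝ, Continuous fun r : ℝ => en f φ (t, r) := fun t =>
    hec.comp (f := fun r : ℝ => (t, r)) (by fun_prop)
  rw [← sub_eq_zero, ← intervalIntegral.integral_sub ((c1 T).intervalIntegrable _ _)
    ((c1 0).intervalIntegrable _ _)]
  have e1 : ∫ r in (0:ℝ)..B, (en f φ (T, r) - en f φ (0, r))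
      = ∫ r in (0:ℝ)..B, ∫ t in (0:ℝ)..T, mm φ (t, r) := by
    apply intervalIntegral.integral_congr
    intro r hr
    rw [Set.uIcc_of_le hB0] at hr
    symm
    apply intervalIntegral.integral_eq_sub_of_hasDerivAt (f := fun t => en f φ (t, r))
    · intro t ht
      rw [Set.uIcc_of_le hT] at ht
      exact S.en_has hf t r ht.1 hr.1
    · exact (hmc.comp (f := fun t : ℝ => (t, r)) (by fun_prop)).intervalIntegrable _ _
  have hint : Integrable (Function.uncurry fun r t : ℝ => mm φ (t, r))
      ((volume.restrict (Set.Ioc 0 B)).prod (volume.restrict (Set.Ioc 0 T))) := by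
    have hc : Continuous (Function.uncurry fun r t : ℝ => mm φ (t, r)) :=
      hmc.comp (f := fun z : ℝ × ℝ => (z.2, z.1)) (by fun_prop)
    rw [Measure.prod_restrict, ← Measure.volume_eq_prod]
    exact (hc.continuousOn.integrableOn_compact (isCompact_Icc.prod isCompact_Icc)).mono_set
        (Set.prod_mono Set.Ioc_subset_Icc_self Set.Ioc_subset_Icc_self)
  rw [e1]
  simp only [intervalIntegral.integral_of_le hB0, intervalIntegral.integral_of_le hT]
  rw [integral_integral_swap hint]
  apply setIntegral_eq_zero_of_forall_eq_zero
  intro t ht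
  rw [← intervalIntegral.integral_of_le hB0,
    intervalIntegral.integral_eq_sub_of_hasDerivAt (fun r _ => mm_has S.smo t r)
    ((hmc.comp (f := fun r : ℝ => (t, r)) (by fun_prop)).intervalIntegrable _ _)]
  rw [right_dd (vv_smo S.smo) h _ t B ht.1.le (by linarith [ht.2]), vt S.smo t 0]
  simp

lemma Sol.main {f : ℝ → ℝ} {φ : ℝ → ℝ → ℝ} {K c : ℝ} (S : Sol f φ K c) (hf : Continuous f) :
    IntegrableOn (fun t : ℝ => ∫ r in Set.Ioi (0:ℝ),
            (r ^ 2 / (1 + r) ^ 4) * ((φ t r) ^ 2 + (pr φ t r) ^ 2 + (pt φ t r) ^ 2))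
          (Set.Ioi (0:ℝ)) := by
  obtain ⟨N, hN, hR⟩ := S.right
  have hec := en_cont hf S.smo
  have c0 : Continuous fun z : ℝ × ℝ => φ z.1 z.2 := S.smo.continuous
  have cr : Continuous fun z : ℝ × ℝ => pr φ z.1 z.2 := (pr_smo S.smo).continuous
  have ct : Continuous fun z : ℝ × ℝ => pt φ z.1 z.2 := (pt_smo S.smo).continuous
  have c1 : ∀ t : ℝ, Continuous fun r : ℝ => en f φ (t, r) := fun t =>
    hec.comp (f := fun r : ℝ => (t, r)) (by fun_prop)
  have en0 : ∀ t r : ℝ, 0 ≤ t → 0 ≤ r → 0 ≤ en f φ (t, r) := by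
    intro t r ht hr
    have := S.Fn t r ht hr
    unfold en
    positivity
  set E := ∫ r in (0:ℝ)..(N + 1), en f φ (0, r) with hE
  have hE0 : 0 ≤ E := by
    apply intervalIntegral.integral_nonneg (by linarith)
    intro r hr
    exact en0 0 r le_rfl hr.1
  have hφ0 : ∀ t r : ℝ, 0 < r → vv φ (t, r) = 0 → φ t r = 0 := by
    intro t r hr h
    rcases mul_eq_zero.1 h with h | h
    · exact absurd h hr.ne'
    · exact h
  -- initial energy on a longer interval
  have hE1 : ∀ B : ℝ, N + 1 ≤ B → ∫ r in (0:ℝ)..B, en f φ (0, r) = E := by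
    intro B hB
    rw [hE, ← intervalIntegral.integral_add_adjacent_intervals (b := N + 1)
      ((c1 0).intervalIntegrable _ _) ((c1 0).intervalIntegrable _ _)]
    have : ∀ r ∈ Set.uIcc (N + 1) B, en f φ (0, r) = 0 := by
      intro r hr
      rw [Set.uIcc_of_le hB] at hr
      have hr1 := hr.1
      unfold en
      rw [right_dd (vv_smo S.smo) hR _ 0 r le_rfl (by linarith),
        right_dd (vv_smo S.smo) hR _ 0 r le_rfl (by linarith)]
      have : φ 0 r = 0 := hφ0 0 r (by linarith) (hR 0 r le_rfl (by linarith))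
      simp [this, pot]
    rw [intervalIntegral.integral_congr this]
    simp
  have hopl : IsOpen {z : ℝ × ℝ | 0 < z.2 ∧ z.2 < z.1} :=
    (isOpen_lt (f := fun _ : ℝ × ℝ => (0:ℝ)) (g := fun z => z.2)
        (by fun_prop) (by fun_prop)).inter
      (isOpen_lt (f := fun z : ℝ × ℝ => z.2) (g := fun z => z.1) (by fun_prop) (by fun_prop))
  have hL := dd_zero_of_open hopl (V := vv φ) (fun z hz => S.left z.1 z.2 hz.1.le hz.2.le)
  have hcpos : ∀ t r : ℝ, 0 ≤ t → 0 ≤ r → (φ t r) ^ 2 ≤ c ^ 2 := by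
    intro t r ht hr
    rw [← sq_abs]
    exact pow_le_pow_left₀ (abs_nonneg _) (S.bd t r ht hr) 2
  -- where the integrand vanishes
  have gz : ∀ t r : ℝ, 0 < r → vv φ (t, r) = 0 → dd (1, 0) (vv φ) (t, r) = 0 →
      dd (0, 1) (vv φ) (t, r) = 0 →
      (r ^ 2 / (1 + r) ^ 4) * ((φ t r) ^ 2 + (pr φ t r) ^ 2 + (pt φ t r) ^ 2) = 0 := by
    intro t r hr h1 h2 h3
    have h4 := hφ0 t r hr h1
    rw [vt S.smo] at h2
    rw [vr S.smo, h4, zero_add] at h3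
    have h5 : pt φ t r = 0 := (mul_eq_zero.1 h2).resolve_left hr.ne'
    have h6 : pr φ t r = 0 := (mul_eq_zero.1 h3).resolve_left hr.ne'
    simp [h4, h5, h6]
  have gb : ∀ t r : ℝ, 0 < t → t ≤ r →
      (r ^ 2 / (1 + r) ^ 4) * ((φ t r) ^ 2 + (pr φ t r) ^ 2 + (pt φ t r) ^ 2)
        ≤ (1 + t ^ 2)⁻¹ * (3 * c ^ 2 + 4 * en f φ (t, r)) := by
    intro t r ht hr
    have hr0 : 0 < r := by linarith
    have h1 := hcpos t r ht.le hr0.le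
    have h2 := S.Fn t r ht.le hr0.le
    have h3 := vt S.smo t r
    have h4 := vr S.smo t r
    have h5 : 2 * (dd (1, 0) (vv φ) (t, r)) ^ 2 + 2 * (dd (0, 1) (vv φ) (t, r)) ^ 2
        ≤ 4 * en f φ (t, r) := by
      unfold en
      have : 0 ≤ r ^ 2 * pot f (φ t r) := by positivity
      simp only; linarith
    rw [h3, h4] at h5
    set a := φ t r
    set b := pr φ t r
    set d := pt φ t r
    have h6 : r ^ 2 * (a ^ 2 + b ^ 2 + d ^ 2)
        ≤ (1 + r) ^ 2 * (3 * c ^ 2 + 4 * en f φ (t, r)) := by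
      have i1 : r ^ 2 * (a ^ 2 + b ^ 2 + d ^ 2) ≤
          3 * (1 + r) ^ 2 * a ^ 2 + (2 * (r * d) ^ 2 + 2 * (a + r * b) ^ 2) := by
        have q1 : 0 ≤ (2 * a + r * b) ^ 2 := sq_nonneg _
        have q2 : 0 ≤ (r * d) ^ 2 := sq_nonneg _
        have q3 : 0 ≤ r * a ^ 2 := by positivity
        have q4 : 0 ≤ r ^ 2 * a ^ 2 := by positivity
        have q5 : 0 ≤ a ^ 2 := by positivity
        nlinarith
      have i2 : 3 * (1 + r) ^ 2 * a ^ 2 ≤ 3 * (1 + r) ^ 2 * c ^ 2 := by gcongr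
      have i3 : 4 * en f φ (t, r) ≤ (1 + r) ^ 2 * (4 * en f φ (t, r)) := by
        have := en0 t r ht.le hr0.le
        nlinarith [sq_nonneg r, mul_nonneg hr0.le this, mul_nonneg (sq_nonneg r) this]
      linarith
    have h7 : 0 ≤ 3 * c ^ 2 + 4 * en f φ (t, r) := by
      have := en0 t r ht.le hr0.le
      positivity
    rw [div_mul_eq_mul_div, div_le_iff₀ (by positivity)]
    refine h6.trans ?_
    have h8 : (1 + r) ^ 2 ≤ (1 + t ^ 2)⁻¹ * (1 + r) ^ 4 := by
      rw [le_inv_mul_iff₀ (by positivity)]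
      have : 1 + t ^ 2 ≤ (1 + r) ^ 2 := by nlinarith
      calc (1 + t ^ 2) * (1 + r) ^ 2 ≤ (1 + r) ^ 2 * (1 + r) ^ 2 := by gcongr
        _ = (1 + r) ^ 4 := by ring
    calc _ ≤ ((1 + t ^ 2)⁻¹ * (1 + r) ^ 4) * (3 * c ^ 2 + 4 * en f φ (t, r)) := by gcongr
      _ = _ := by ring
  have main : ∀ t : ℝ, 0 < t → ∫ r in Set.Ioi (0:ℝ),
      (r ^ 2 / (1 + r) ^ 4) * ((φ t r) ^ 2 + (pr φ t r) ^ 2 + (pt φ t r) ^ 2)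
      ≤ (3 * c ^ 2 * (N + 1) + 4 * E) * (1 + t ^ 2)⁻¹ := by
    intro t ht
    set B := N + t + 1 with hB
    have i1 : ∫ r in Set.Ioi (0:ℝ),
      (r ^ 2 / (1 + r) ^ 4) * ((φ t r) ^ 2 + (pr φ t r) ^ 2 + (pt φ t r) ^ 2)
      = ∫ r in Set.Icc t B,
      (r ^ 2 / (1 + r) ^ 4) * ((φ t r) ^ 2 + (pr φ t r) ^ 2 + (pt φ t r) ^ 2) := by
      apply setIntegral_eq_of_subset_of_forall_sdiff_eq_zero measurableSet_Ioi
      · intro r hr; exact lt_of_lt_of_le ht hr.1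
      · rintro r ⟨hr0, hr⟩
        have hr0' : 0 < r := hr0
        rw [Set.mem_Icc, not_and_or, not_le, not_le] at hr
        rcases hr with hr | hr
        · exact gz t r hr0' (S.left t r hr0'.le hr.le) (hL _ (t, r) ⟨hr0', hr⟩)
            (hL _ (t, r) ⟨hr0', hr⟩)
        · have : N + t < r := by linarith
          exact gz t r hr0' (hR t r ht.le this) (right_dd (vv_smo S.smo) hR _ t r ht.le this)
            (right_dd (vv_smo S.smo) hR _ t r ht.le this)
    rw [i1]
    have htB : t ≤ B := by linarith
    have ci : IntegrableOn (fun r => en f φ (t, r)) (Set.Icc t B) :=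
      (c1 t).continuousOn.integrableOn_compact isCompact_Icc
    have ci0 : IntegrableOn (fun r => en f φ (t, r)) (Set.Icc 0 B) :=
      (c1 t).continuousOn.integrableOn_compact isCompact_Icc
    have i2 : ∫ r in Set.Icc t B,
      (r ^ 2 / (1 + r) ^ 4) * ((φ t r) ^ 2 + (pr φ t r) ^ 2 + (pt φ t r) ^ 2)
      ≤ ∫ r in Set.Icc t B, (1 + t ^ 2)⁻¹ * (3 * c ^ 2 + 4 * en f φ (t, r)) := by
      have d0 : Continuous fun r : ℝ => φ t r := c0.comp (f := fun r : ℝ => (t, r)) (by fun_prop)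
      have dr : Continuous fun r : ℝ => pr φ t r := cr.comp (f := fun r : ℝ => (t, r)) (by fun_prop)
      have dt : Continuous fun r : ℝ => pt φ t r := ct.comp (f := fun r : ℝ => (t, r)) (by fun_prop)
      have d1 := c1 t
      apply setIntegral_mono_on
      · apply ContinuousOn.integrableOn_compact isCompact_Icc
        apply ContinuousOn.mul
        · apply ContinuousOn.div (by fun_prop) (by fun_prop)
          intro r hr
          have : 0 < 1 + r := by linarith [hr.1]
          positivity
        · fun_prop
      · apply ContinuousOn.integrableOn_compact isCompact_Icc
        fun_prop
      · exact measurableSet_Icc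
      · intro r hr; exact gb t r ht hr.1
    refine i2.trans ?_
    have cc : IntegrableOn (fun _ : ℝ => 3 * c ^ 2) (Set.Icc t B) :=
      continuousOn_const.integrableOn_compact isCompact_Icc
    rw [integral_const_mul, integral_add cc (ci.const_mul 4)]
    have i3 : ∫ r in Set.Icc t B, en f φ (t, r) ≤ E := by
      calc _ ≤ ∫ r in Set.Icc 0 B, en f φ (t, r) := by
            apply setIntegral_mono_set ci0
            · filter_upwards [ae_restrict_mem measurableSet_Icc] with r hr
              exact en0 t r ht.le hr.1
            · exact (Set.Icc_subset_Icc_left ht.le).eventuallyLE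
        _ = ∫ r in (0:ℝ)..B, en f φ (t, r) := by
            rw [intervalIntegral.integral_of_le (by linarith), integral_Icc_eq_integral_Ioc]
        _ = ∫ r in (0:ℝ)..B, en f φ (0, r) := S.energy hf hN hR t B ht.le (by linarith)
        _ = E := hE1 B (by linarith)
    have i4 : ∫ r in Set.Icc t B, 3 * c ^ 2 = 3 * c ^ 2 * (N + 1) := by
      rw [setIntegral_const, Real.volume_real_Icc_of_le htB, hB, smul_eq_mul]; ring
    rw [i4, integral_const_mul, mul_comm]
    gcongr
  have hmeas : AEStronglyMeasurable (fun t : ℝ => ∫ r in Set.Ioi (0:ℝ),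
      (r ^ 2 / (1 + r) ^ 4) * ((φ t r) ^ 2 + (pr φ t r) ^ 2 + (pt φ t r) ^ 2))
      (volume.restrict (Set.Ioi 0)) := by
    have m0 := c0.measurable
    have mr := cr.measurable
    have mt := ct.measurable
    have : StronglyMeasurable (fun z : ℝ × ℝ => (z.2 ^ 2 / (1 + z.2) ^ 4) *
        ((φ z.1 z.2) ^ 2 + (pr φ z.1 z.2) ^ 2 + (pt φ z.1 z.2) ^ 2)) := by
      apply Measurable.stronglyMeasurable
      fun_prop
    exact (this.integral_prod_right' (ν := volume.restrict (Set.Ioi (0:ℝ)))).aestronglyMeasurable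
  refine Integrable.mono' (g := fun t => (3 * c ^ 2 * (N + 1) + 4 * E) * (1 + t ^ 2)⁻¹)
    (integrable_inv_one_add_sq.const_mul _).integrableOn hmeas ?_
  filter_upwards [ae_restrict_mem measurableSet_Ioi] with t ht
  rw [Real.norm_of_nonneg]
  · exact main t ht
  · apply setIntegral_nonneg measurableSet_Ioi
    intro r hr
    have : (0:ℝ) < r := hr
    positivity

/-- Under the small-data flatness condition `0 ≤ s f(s) ≤ C s⁴` near the
origin, there is `ε₀ > 0` such that any radial solution whose associated field on `ℝ³` is
uniformly `ε`-small (`ε ≤ ε₀`) in `H¹ ∩ L^∞` has finite weighted space-time norm. -/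
theorem spacetime_integrability_small_data
    (f : ℝ → ℝ) (hf : ContDiff ℝ 1 f) (hf0 : f 0 = 0)
    (C δ : ℝ) (hC : 0 < C) (hδ : 0 < δ)
    (hgrowth : ∀ s ∈ Set.Ioo (-δ) δ, 0 ≤ s * f s ∧ s * f s ≤ C * s ^ 4) :
    ∃ ε₀ : ℝ, 0 < ε₀ ∧
      ∀ (φ : ℝ → ℝ → ℝ) (ε : ℝ), ε ≤ ε₀ →
        ContDiff ℝ (⊤ : ℕ∞) (Function.uncurry φ) →
        SuppIn φ →
        (∀ t : ℝ, 0 ≤ t → ∀ r : ℝ, 0 < r →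
          ptt φ t r = prr φ t r + (2 / r) * pr φ t r - f (φ t r)) →
        (∀ t : ℝ, 0 ≤ t → ∀ r : ℝ, 0 ≤ r →
          Real.sqrt (∫ x : E3,
              ((φ t ‖x‖) ^ 2 + ‖gradient (fun y : E3 => φ t ‖y‖) x‖ ^ 2))
            + |φ t r| ≤ ε) →
        IntegrableOn (fun t : ℝ => ∫ r in Set.Ioi (0:ℝ),
            (r ^ 2 / (1 + r) ^ 4) * ((φ t r) ^ 2 + (pr φ t r) ^ 2 + (pt φ t r) ^ 2))
          (Set.Ioi (0:ℝ)) := by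
  refine ⟨δ / 2, by positivity, ?_⟩
  intro φ ε hε hφ hs heq hb
  have bd : ∀ t r : ℝ, 0 ≤ t → 0 ≤ r → |φ t r| ≤ δ / 2 := by
    intro t r ht hr
    have h1 := hb t ht r hr
    have h2 := Real.sqrt_nonneg (∫ x : E3,
              ((φ t ‖x‖) ^ 2 + ‖gradient (fun y : E3 => φ t ‖y‖) x‖ ^ 2))
    linarith
  have S : Sol f φ (C * δ ^ 2) (δ / 2) :=
    { smo := hφ
      supp := hs
      K0 := by positivity
      eqn := pde hφ hs heq
      fb := fun t r ht hr => fbound hC hδ hf0 hgrowth _ (bd t r ht hr)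
      bd := bd
      Fn := fun t r ht hr => pot_nonneg hδ hgrowth _ (bd t r ht hr) }
  exact S.main hf.continuous

end
end

section
/- Let q ∈ [−1,1] with q ≠ 0, and define the axion-monodromy potential F(s) = (1/q)·((1+s²)^{q/2} − 1) with derivative f(s) = F'(s) = s·(1+s²)^{q/2 − 1}. Then 2F(s) − s f(s) ≥ 0 for all s ∈ ℝ. -/
/-- The defocusing sign condition for the axion-monodromy potential
`F(s) = (1/q)((1+s²)^{q/2} - 1)` with `f(s) = s (1+s²)^{q/2-1}`, `q ∈ [-1,1]`, `q ≠ 0`: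
for every real `s`, `2F(s) - s f(s) ≥ 0`. -/
theorem axion_monodromy_defocusing_sign
    (q : ℝ) (hq : q ∈ Set.Icc (-1 : ℝ) 1) (hq0 : q ≠ 0) (s : ℝ) :
    0 ≤ 2 * ((1 / q) * ((1 + s ^ 2) ^ (q / 2) - 1))
        - s * (s * (1 + s ^ 2) ^ (q / 2 - 1)) := by
  obtain ⟨h1, h2⟩ := hq
  have hx : (0:ℝ) < 1 + s ^ 2 := by positivity
  have hP : 0 < (1 + s ^ 2) ^ (q / 2) := Real.rpow_pos_of_pos hx _
  rw [Real.rpow_sub_one hx.ne']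
  have hs : s * (s * ((1 + s ^ 2) ^ (q / 2) / (1 + s ^ 2)))
      = (1 + s ^ 2) ^ (q / 2) * (s ^ 2 / (1 + s ^ 2)) := by ring
  rw [hs]
  have hy : (1 + s ^ 2)⁻¹ = 1 + -(s ^ 2 / (1 + s ^ 2)) := by field_simp; ring
  have hy0 : 0 < (1 + s ^ 2)⁻¹ := by positivity
  have hinv := Real.inv_rpow hx.le (q / 2)
  generalize hPd : (1 + s ^ 2) ^ (q / 2) = P at *
  generalize s ^ 2 / (1 + s ^ 2) = t at *
  rw [hy] at hinv hy0
  have key : 2 * ((1 / q) * (P - 1)) - P * t = P * (2 / q * (1 - P⁻¹) - t) := by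
    field_simp
  rw [key]
  refine mul_nonneg hP.le ?_
  rcases lt_or_gt_of_ne hq0 with h | h
  · have hb : 1 + (q / 2) * -t ≤ (1 + -t) ^ (q / 2) := by
      have hc : (1 + -t) ^ (q / 2) = Real.exp (Real.log (1 + -t) * (q / 2)) :=
        Real.rpow_def_of_pos hy0 _
      have h4 := Real.add_one_le_exp (Real.log (1 + -t) * (q / 2))
      have h5 := Real.log_le_sub_one_of_pos hy0
      rw [hc]
      nlinarith
    rw [hinv] at hb
    have : 2 / q * (1 - P⁻¹) - t = (2 / (-q)) * (P⁻¹ - (1 + (q / 2) * -t)) := by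
      field_simp; ring
    rw [this]
    exact mul_nonneg (div_nonneg (by norm_num) (by linarith)) (by linarith)
  · have hb : (1 + -t) ^ (q / 2) ≤ 1 + (q / 2) * -t :=
      rpow_one_add_le_one_add_mul_self (by linarith) (by linarith) (by linarith)
    rw [hinv] at hb
    have : 2 / q * (1 - P⁻¹) - t = (2 / q) * ((1 + (q / 2) * -t) - P⁻¹) := by
      field_simp; ring
    rw [this]
    exact mul_nonneg (div_nonneg (by norm_num) (by linarith)) (by linarith)
end
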